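/- Let (u,τ,S) be a twice continuously differentiable solution of the full compressible Euler equations τ_t − u_x = 0, u_t + p_x = 0, S_t = 0 (p = K e^{S/c_v} τ^{−γ}) on ℝ×[0,T) with τ > 0, where T is a finite positive constant or infinity, satisfying: u(·,0), τ(·,0) > 0, ρ(·,0) = 1/τ(·,0), S(·,0), S′(·,0), α(·,0), β(·,0) uniformly bounded, and the total variation of S(·,0) on ℝ finite. Fix 0 < ε < 1/4, and let K̂₂ be a constant with |k_{2ε}(x,t)| < K̂₂ for all (x,t) ∈ ℝ×[0,T). Let N be a constant such that α_ε(x,0) < N and β_ε(x,0) < N for all x ∈ ℝ, and N > max{ 4(γ+1)K̂₂/ε , 2K̂₂/(1 − 4ε/(γ+1)) }. Then α_ε(x,t) < N and β_ε(x,t) < N for all (x,t) ∈ ℝ×[0,T). -/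

import Mathlib

open Real Set MeasureTheory

noncomputable section

/-- Partial derivative in the spatial variable `x`. -/
def pdx (f : ℝ → ℝ → ℝ) (x t : ℝ) : ℝ := deriv (fun y => f y t) x

/-- Partial derivative in the time variable `t`. -/
def pdt (f : ℝ → ℝ → ℝ) (x t : ℝ) : ℝ := deriv (fun s => f x s) t

/-- The time strip `ℝ × [0, T)`, where `T` is a real number or `+∞`. -/
def strip (T : EReal) : Set (ℝ × ℝ) := {p : ℝ × ℝ | 0 ≤ p.2 ∧ (p.2 : EReal) < T}

/-- `η = (2√(Kγ)/(γ−1)) τ^{−(γ−1)/2}`. -/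
def etaP (K γ : ℝ) (τ : ℝ → ℝ → ℝ) (x t : ℝ) : ℝ :=
  2 * Real.sqrt (K * γ) / (γ - 1) * τ x t ^ (-(γ - 1) / 2)

/-- Gradient variable `α = s_x = u_x + η_x` for the p-system. -/
def alphaP (K γ : ℝ) (u τ : ℝ → ℝ → ℝ) (x t : ℝ) : ℝ :=
  pdx u x t + pdx (etaP K γ τ) x t

/-- Gradient variable `β = r_x = u_x − η_x` for the p-system. -/
def betaP (K γ : ℝ) (u τ : ℝ → ℝ → ℝ) (x t : ℝ) : ℝ :=
  pdx u x t - pdx (etaP K γ τ) x t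

/-- The p-system `τ_t − u_x = 0`, `u_t + p_x = 0` with `p = K τ^{−γ}`, at the point `(x,t)`. -/
def pSystem (K γ : ℝ) (u τ : ℝ → ℝ → ℝ) (x t : ℝ) : Prop :=
  pdt τ x t - pdx u x t = 0 ∧
  pdt u x t + pdx (fun y s => K * τ y s ^ (-γ)) x t = 0

/-- Riemann invariant `s = u + η`. -/
def sRi (K γ : ℝ) (u τ : ℝ → ℝ → ℝ) (x t : ℝ) : ℝ := u x t + etaP K γ τ x t

/-- Riemann invariant `r = u − η`. -/
def rRi (K γ : ℝ) (u τ : ℝ → ℝ → ℝ) (x t : ℝ) : ℝ := u x t - etaP K γ τ x t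

/-- The Lagrangian wave speed `c = √(Kγ) τ^{−(γ+1)/2}`. -/
def cP (K γ : ℝ) (τ : ℝ → ℝ → ℝ) (x t : ℝ) : ℝ :=
  Real.sqrt (K * γ) * τ x t ^ (-(γ + 1) / 2)

/-- The constant `K_τ = (2√(Kγ)/(γ−1))^{2/(γ−1)}`. -/
def KtauC (K γ : ℝ) : ℝ := (2 * Real.sqrt (K * γ) / (γ - 1)) ^ (2 / (γ - 1))

/-- The constant `K_c = √(Kγ) K_τ^{−(γ+1)/2}`. -/
def KcC (K γ : ℝ) : ℝ := Real.sqrt (K * γ) * KtauC K γ ^ (-(γ + 1) / 2)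

/-- `k₁ = ((γ+1)K_c/(2(γ−1))) η^{2/(γ−1)}`. -/
def k1P (K γ : ℝ) (τ : ℝ → ℝ → ℝ) (x t : ℝ) : ℝ :=
  (γ + 1) * KcC K γ / (2 * (γ - 1)) * etaP K γ τ x t ^ (2 / (γ - 1))
/-- `m = e^{S/(2c_v)}`. -/
def mF (cv : ℝ) (S : ℝ → ℝ → ℝ) (x t : ℝ) : ℝ := Real.exp (S x t / (2 * cv))

/-- The ideal polytropic pressure `p = K e^{S/c_v} τ^{−γ}`. -/
def pF (K cv γ : ℝ) (τ S : ℝ → ℝ → ℝ) (x t : ℝ) : ℝ :=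
  K * Real.exp (S x t / cv) * τ x t ^ (-γ)

/-- The full compressible Euler equations `τ_t − u_x = 0`, `u_t + p_x = 0`, `S_t = 0`
with `p = K e^{S/c_v} τ^{−γ}`, at the point `(x,t)`. -/
def fullEuler (K cv γ : ℝ) (u τ S : ℝ → ℝ → ℝ) (x t : ℝ) : Prop :=
  pdt τ x t - pdx u x t = 0 ∧
  pdt u x t + pdx (pF K cv γ τ S) x t = 0 ∧
  pdt S x t = 0

/-- Wave speed `c = K_c m η^{(γ+1)/(γ−1)}` for the full Euler equations. -/
def cF (K cv γ : ℝ) (τ S : ℝ → ℝ → ℝ) (x t : ℝ) : ℝ :=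
  KcC K γ * mF cv S x t * etaP K γ τ x t ^ ((γ + 1) / (γ - 1))

/-- Gradient variable `α = u_x + m η_x + ((γ−1)/γ) m_x η` for the full Euler equations. -/
def alphaF (K cv γ : ℝ) (u τ S : ℝ → ℝ → ℝ) (x t : ℝ) : ℝ :=
  pdx u x t + mF cv S x t * pdx (etaP K γ τ) x t
    + (γ - 1) / γ * pdx (mF cv S) x t * etaP K γ τ x t

/-- Gradient variable `β = u_x − m η_x − ((γ−1)/γ) m_x η` for the full Euler equations. -/
def betaF (K cv γ : ℝ) (u τ S : ℝ → ℝ → ℝ) (x t : ℝ) : ℝ :=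
  pdx u x t - mF cv S x t * pdx (etaP K γ τ) x t
    - (γ - 1) / γ * pdx (mF cv S) x t * etaP K γ τ x t

/-- `k₂ = ((γ−1)/(γ(γ+1))) η m_x`. -/
def k2F (K cv γ : ℝ) (τ S : ℝ → ℝ → ℝ) (x t : ℝ) : ℝ :=
  (γ - 1) / (γ * (γ + 1)) * etaP K γ τ x t * pdx (mF cv S) x t

/-- Weighted gradient variable `α_ε = η^{2ε/(γ−1)} α`. -/
def aeps (K cv γ ε : ℝ) (u τ S : ℝ → ℝ → ℝ) (x t : ℝ) : ℝ :=
  etaP K γ τ x t ^ (2 * ε / (γ - 1)) * alphaF K cv γ u τ S x t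

/-- Weighted gradient variable `β_ε = η^{2ε/(γ−1)} β`. -/
def beps (K cv γ ε : ℝ) (u τ S : ℝ → ℝ → ℝ) (x t : ℝ) : ℝ :=
  etaP K γ τ x t ^ (2 * ε / (γ - 1)) * betaF K cv γ u τ S x t

/-- `k_{1ε} = ((γ+1)K_c/(2(γ−1))) η^{(2/(γ−1))(1−ε)}`. -/
def k1e (K γ ε : ℝ) (τ : ℝ → ℝ → ℝ) (x t : ℝ) : ℝ :=
  (γ + 1) * KcC K γ / (2 * (γ - 1)) * etaP K γ τ x t ^ (2 / (γ - 1) * (1 - ε))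

/-- `k_{2ε} = ((γ−1)/(γ(γ+1))) η^{1+2ε/(γ−1)} m_x`. -/
def k2e (K cv γ ε : ℝ) (τ S : ℝ → ℝ → ℝ) (x t : ℝ) : ℝ :=
  (γ - 1) / (γ * (γ + 1)) * etaP K γ τ x t ^ (1 + 2 * ε / (γ - 1)) * pdx (mF cv S) x t

open Filter Function Topology

/-!
Along its characteristics (`σ = 1` for `α_ε`, `σ = -1` for `β_ε`) a weighted gradient variable `a`
satisfies, with `b` the other one, the Riccati equation
`D_σ a = k₁ε * (σ * k₂ε * ((3 - 4 * ε) * a + b) + (1 - 4 * ε / (γ + 1)) * a * b - a ^ 2)`,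
whose right side is negative when `a = N` and `b ≤ N`. Hence, within a backward cone steeper than
the characteristics, there is no first time at which one of the two variables reaches `N`.

Such a cone exists because the wave speed is bounded on `ℝ × [0, t₀]`. As `S` is constant in time,
it is enough to bound `mη`. The Riemann variables `mη ± u` change along characteristics at a rate
at most `c * mη * |S_x| / (2 * c_v * γ)`. Where `mη ≤ 3M` they therefore stay below barriers
`M * (2 ± V)`, slightly increased in time, with `V` an antiderivative of
`3 * |S_x| / (2 * c_v * γ)`. Finite total variation of `S` makes `|V| ≤ 1` possible near `+∞`, and
with another choice of `V` near `-∞`; then the sum of the two barriers keeps `mη ≤ 3M`. The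
remaining region is compact.
-/

/-! ### First-time arguments in backward cones -/

theorem exists_first_nonneg {X ι : Type*} [TopologicalSpace X] [Finite ι] {Q : Set X}
    (hQ : IsCompact Q) {time : X → ℝ} (htime : ContinuousOn time Q) {F : ι → X → ℝ}
    (hF : ∀ i, ContinuousOn (F i) Q) (hne : ∃ p ∈ Q, ∃ i, 0 ≤ F i p) :
    ∃ p ∈ Q, ∃ i, 0 ≤ F i p ∧ ∀ q ∈ Q, time q < time p → ∀ j, F j q < 0 := by
  have hcompact : IsCompact (⋃ i, Q ∩ F i ⁻¹' Ici 0) :=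
    isCompact_iUnion fun i => (hF i).upperSemicontinuousOn.isCompact_inter_preimage_Ici hQ 0
  obtain ⟨p₀, hp₀, i₀, hi₀⟩ := hne
  obtain ⟨p, hp, hmin⟩ := hcompact.exists_isMinOn ⟨p₀, mem_iUnion.2 ⟨i₀, hp₀, hi₀⟩⟩
    (htime.mono (iUnion_subset fun _ => inter_subset_left))
  obtain ⟨i, hpQ, hi⟩ := mem_iUnion.1 hp
  refine ⟨p, hpQ, i, hi, fun q hq hlt j => ?_⟩
  by_contra! hj
  exact (hmin (mem_iUnion.2 ⟨j, hq, hj⟩)).not_gt hlt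

/-- The domain of dependence of the point `(x₀, t₀)` over the spatial set `I`, for signals of
speed at most `L`. -/
def backwardCone (I : Set ℝ) (L x₀ t₀ : ℝ) : Set (ℝ × ℝ) :=
  {p | p.1 ∈ I ∧ p.2 ∈ Icc 0 t₀ ∧ |p.1 - x₀| ≤ L * (t₀ - p.2)}

theorem isCompact_backwardCone {I : Set ℝ} (hI : IsClosed I) {L : ℝ} (hL : 0 ≤ L) (x₀ t₀ : ℝ) :
    IsCompact (backwardCone I L x₀ t₀) := by
  refine IsCompact.of_isClosed_subset
    ((isCompact_Icc (a := x₀ - L * t₀) (b := x₀ + L * t₀)).prod (isCompact_Icc (a := 0) (b := t₀)))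
    ?_ ?_
  · exact (hI.preimage continuous_fst).inter <| (isClosed_Icc.preimage continuous_snd).inter <|
      isClosed_le (f := fun p : ℝ × ℝ => |p.1 - x₀|) (by fun_prop) (by fun_prop)
  · rintro ⟨x, t⟩ ⟨-, ht, hx⟩
    have hbound := abs_le.1 (hx.trans (mul_le_mul_of_nonneg_left (sub_le_self t₀ ht.1) hL))
    exact ⟨⟨by linarith [hbound.1], by linarith [hbound.2]⟩, ht⟩

theorem eventually_mem_backwardCone {I : Set ℝ} {L x₀ t₀ x t v : ℝ}
    (hp : (x, t) ∈ backwardCone I L x₀ t₀) (hx : x ∈ interior I) (ht : 0 < t) (hv : |v| ≤ L) :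
    ∀ᶠ s in 𝓝[<] t, (x + (s - t) * v, s) ∈ backwardCone I L x₀ t₀ := by
  have hspace : ∀ᶠ s in 𝓝[<] t, x + (s - t) * v ∈ I := by
    have hline : ContinuousAt (fun s => x + (s - t) * v) t := by fun_prop
    refine nhdsWithin_le_nhds (hline.eventually_mem ?_)
    simpa using mem_interior_iff_mem_nhds.1 hx
  filter_upwards [hspace, Ioo_mem_nhdsLT ht] with s hs hst
  refine ⟨hs, ⟨hst.1.le, hst.2.le.trans hp.2.1.2⟩, ?_⟩
  calc |x + (s - t) * v - x₀| = |(x - x₀) + (s - t) * v| := by ring_nf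
    _ ≤ |x - x₀| + (t - s) * |v| := by
        rw [← abs_of_pos (sub_pos.2 hst.2), abs_sub_comm t s, ← abs_mul]
        exact abs_add_le _ _
    _ ≤ L * (t₀ - t) + (t - s) * L := by
        gcongr
        · exact hp.2.2
        · exact (sub_pos.2 hst.2).le
    _ = L * (t₀ - s) := by ring

theorem neg_of_backward_increasing {ι : Type*} [Finite ι] {I : Set ℝ} (hI : IsClosed I)
    {L : ℝ} (hL : 0 ≤ L) {x₀ t₀ : ℝ} (hx₀ : x₀ ∈ I) (ht₀ : 0 ≤ t₀) {F : ι → ℝ → ℝ → ℝ}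
    (hF : ∀ i, ContinuousOn (fun p : ℝ × ℝ => F i p.1 p.2) (backwardCone I L x₀ t₀))
    (hboundary : ∀ i x t, (x, t) ∈ backwardCone I L x₀ t₀ → t = 0 ∨ x ∈ frontier I → F i x t < 0)
    (hzero : ∀ i x t, (x, t) ∈ backwardCone I L x₀ t₀ → 0 < t → (∀ j, F j x t ≤ 0) → F i x t = 0 →
      ∃ v d : ℝ, |v| ≤ L ∧ d < 0 ∧ HasDerivAt (fun s => F i (x + (s - t) * v) s) d t) (i : ι) :
    F i x₀ t₀ < 0 := by
  set Q := backwardCone I L x₀ t₀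
  by_contra! hnonneg
  have hapex : (x₀, t₀) ∈ Q := ⟨hx₀, ⟨ht₀, le_rfl⟩, by simp⟩
  obtain ⟨⟨x, t⟩, hp, i, hi, hfirst⟩ := exists_first_nonneg (isCompact_backwardCone hI hL x₀ t₀)
    continuous_snd.continuousOn hF ⟨_, hapex, i, hnonneg⟩
  have ht : 0 < t := hp.2.1.1.lt_of_ne fun h => (hboundary i x t hp (.inl h.symm)).not_ge hi
  have hx : x ∈ interior I := by
    by_contra hx
    exact (hboundary i x t hp (.inr ⟨subset_closure hp.1, hx⟩)).not_ge hi
  have hle (j : ι) : F j x t ≤ 0 := by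
    have hvertical := eventually_mem_backwardCone hp hx ht (v := 0) (by simpa using hL)
    simp only [mul_zero, add_zero] at hvertical
    have htendsto : Tendsto (fun s => (x, s)) (𝓝[<] t) (𝓝[Q] (x, t)) :=
      tendsto_nhdsWithin_iff.2
        ⟨((Continuous.prodMk_right x).tendsto t).mono_left nhdsWithin_le_nhds, hvertical⟩
    refine le_of_tendsto ((hF j (x, t) hp).tendsto.comp htendsto) ?_
    filter_upwards [hvertical, self_mem_nhdsWithin] with s hs hst
    exact (hfirst _ hs hst j).le
  obtain ⟨v, d, hv, hd, hderiv⟩ := hzero i x t hp ht hle (le_antisymm (hle i) hi)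
  -- `F i` decreases to zero along the line of slope `v`, so it was positive just before.
  have hsign := eventually_nhdsWithin_sign_eq_of_deriv_neg (hderiv.deriv ▸ hd)
    (by simpa using le_antisymm (hle i) hi)
  obtain ⟨s, hs, hst, hpos⟩ := ((eventually_mem_backwardCone hp hx ht hv).and
    (eventually_mem_nhdsWithin.and (nhdsWithin_le_nhds hsign))).exists
  rw [sign_pos (sub_pos.2 hst), sign_eq_one_iff] at hpos
  exact (hfirst _ hs hst i).not_gt hpos

/-! ### Functions of bounded variation -/

theorem abs_deriv_le_of_abs_sub_le {f V : ℝ → ℝ} (h : ∀ {a b}, a ≤ b → |f b - f a| ≤ V b - V a)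
    {x : ℝ} (hV : DifferentiableAt ℝ V x) : |deriv f x| ≤ deriv V x := by
  by_cases hf : DifferentiableAt ℝ f x
  · have hadd : Monotone (V + f) := fun a b hab => by
      simpa only [Pi.add_apply] using by linarith [neg_le_of_abs_le (h hab)]
    have hsub : Monotone (V - f) := fun a b hab => by
      simpa only [Pi.sub_apply] using by linarith [le_of_abs_le (h hab)]
    have hadd_deriv := deriv_add hV hf ▸ hadd.deriv_nonneg (x := x)
    have hsub_deriv := deriv_sub hV hf ▸ hsub.deriv_nonneg (x := x)
    exact abs_le.2 ⟨by linarith, by linarith⟩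
  · have hmono : Monotone V := fun a b hab => by linarith [abs_nonneg (f b - f a), h hab]
    simpa only [deriv_zero_of_not_differentiableAt hf, abs_zero] using hmono.deriv_nonneg

theorem integrable_deriv_of_boundedVariationOn {f : ℝ → ℝ} (hf : BoundedVariationOn f univ) :
    Integrable (deriv f) := by
  have hloc := hf.locallyBoundedVariationOn
  set V : ℝ → ℝ := variationOnFromTo f univ 0
  have hsub {a b : ℝ} (hab : a ≤ b) : V b - V a = (eVariationOn f (univ ∩ Icc a b)).toReal := by
    rw [← variationOnFromTo.eq_of_le f univ hab, sub_eq_iff_eq_add',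
      variationOnFromTo.add hloc (mem_univ 0) (mem_univ a) (mem_univ b)]
  have hincrement {a b : ℝ} (hab : a ≤ b) : |f b - f a| ≤ V b - V a := by
    rw [hsub hab, ← Real.dist_eq]
    exact (hf.mono (subset_univ _)).dist_le ⟨mem_univ b, hab, le_rfl⟩ ⟨mem_univ a, le_rfl, hab⟩
  have hV : Monotone V := fun a b hab => by linarith [abs_nonneg (f b - f a), hincrement hab]
  have hderiv : ∀ᵐ x, ‖deriv f x‖ ≤ deriv V x :=
    hV.ae_differentiableAt.mono fun x => abs_deriv_le_of_abs_sub_le hincrement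
  have hint (a b : ℝ) : IntervalIntegrable (deriv f) volume a b :=
    (hf.mono (subset_univ _)).intervalIntegrable_deriv
  refine integrable_of_intervalIntegral_norm_bounded (eVariationOn f univ).toReal
    (fun r => (hint (-r) r).1) tendsto_neg_atTop_atBot tendsto_id ?_
  filter_upwards [eventually_ge_atTop (0 : ℝ)] with r hr
  have hr' : -r ≤ r := by linarith
  have hmono : MonotoneOn V (uIcc (-r) r) := hV.monotoneOn _
  calc ∫ x in -r..r, ‖deriv f x‖ ≤ ∫ x in -r..r, deriv V x :=
        intervalIntegral.integral_mono_ae hr' (hint _ _).norm hmono.intervalIntegrable_deriv hderiv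
    _ ≤ V r - V (-r) :=
        (uIcc_of_le (sub_nonneg.2 (hV hr')) ▸ hmono.intervalIntegral_deriv_mem_uIcc).2
    _ ≤ (eVariationOn f univ).toReal := by
        rw [hsub hr']
        exact ENNReal.toReal_mono hf (eVariationOn.mono f inter_subset_left)

theorem exists_abs_le_of_boundedVariationOn {f : ℝ → ℝ} (hf : BoundedVariationOn f univ) :
    ∃ A, ∀ x, |f x| ≤ A := by
  refine ⟨(eVariationOn f univ).toReal + |f 0|, fun x => ?_⟩
  have hdist := hf.dist_le (mem_univ x) (mem_univ 0)
  rw [Real.dist_eq] at hdist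
  linarith [abs_sub_abs_le_abs_sub (f x) (f 0)]

theorem exists_antideriv_tendsto_zero {g : ℝ → ℝ} (hg : Continuous g) (hint : Integrable g) :
    (∃ V : ℝ → ℝ, (∀ x, HasDerivAt V (g x) x) ∧ Tendsto V atTop (𝓝 0)) ∧
      ∃ V : ℝ → ℝ, (∀ x, HasDerivAt V (g x) x) ∧ Tendsto V atBot (𝓝 0) := by
  have hderiv (x : ℝ) : HasDerivAt (fun x => ∫ y in 0..x, g y) (g x) x :=
    hg.integral_hasStrictDerivAt 0 x |>.hasDerivAt
  have htop := intervalIntegral_tendsto_integral_Ioi 0 hint.integrableOn tendsto_id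
  have hbot := (intervalIntegral_tendsto_integral_Iic 0 hint.integrableOn tendsto_id).neg
  simp only [← intervalIntegral.integral_symm, id] at htop hbot
  exact ⟨⟨_, fun x => (hderiv x).sub_const _, sub_self (∫ y in Ioi 0, g y) ▸ htop.sub_const _⟩,
    _, fun x => (hderiv x).sub_const _, sub_self (-∫ y in Iic 0, g y) ▸ hbot.sub_const _⟩

/-! ### Partial derivatives -/

section Strip

variable {T : EReal} {f : ℝ → ℝ → ℝ} {x t : ℝ}

theorem convex_strip (T : EReal) : Convex ℝ (strip T) := by
  have htime : OrdConnected {t : ℝ | 0 ≤ t ∧ (t : EReal) < T} :=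
    ⟨fun a ha b hb c hc => ⟨ha.1.trans hc.1, (EReal.coe_le_coe_iff.2 hc.2).trans_lt hb.2⟩⟩
  exact htime.convex.linear_preimage (LinearMap.snd ℝ ℝ ℝ)

theorem strip_mem_nhds (ht : 0 < t) (htT : (t : EReal) < T) : strip T ∈ 𝓝 (x, t) := by
  have htime : ∀ᶠ s : ℝ in 𝓝 t, 0 ≤ s ∧ (s : EReal) < T :=
    (eventually_ge_nhds ht).and
      (continuous_coe_real_ereal.continuousAt.eventually_lt continuousAt_const htT)
  exact (continuous_snd.tendsto (x, t)).eventually htime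

theorem uniqueDiffOn_strip (hT : 0 < T) : UniqueDiffOn ℝ (strip T) := by
  obtain ⟨t, h0, ht⟩ := EReal.lt_iff_exists_real_btwn.1 hT
  exact uniqueDiffOn_convex (convex_strip T)
    ⟨(0, t), mem_interior_iff_mem_nhds.2 (strip_mem_nhds (EReal.coe_pos.1 h0) ht)⟩

theorem backwardCone_subset_strip {I : Set ℝ} {L x₀ t₀ : ℝ} (ht₀T : (t₀ : EReal) < T) :
    backwardCone I L x₀ t₀ ⊆ strip T := fun _ hp =>
  ⟨hp.2.1.1, (EReal.coe_le_coe_iff.2 hp.2.1.2).trans_lt ht₀T⟩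

theorem contDiff_slice_of_strip {n : WithTop ℕ∞} (hf : ContDiffOn ℝ n (uncurry f) (strip T))
    (ht : 0 ≤ t) (htT : (t : EReal) < T) : ContDiff ℝ n (fun y => f y t) :=
  hf.comp_contDiff (contDiff_prodMk_left t) fun _ => ⟨ht, htT⟩

theorem hasDerivAt_pdx_of_strip {n : WithTop ℕ∞} (hf : ContDiffOn ℝ n (uncurry f) (strip T))
    (hn : n ≠ 0) (ht : 0 ≤ t) (htT : (t : EReal) < T) :
    HasDerivAt (fun y => f y t) (pdx f x t) x :=
  ((contDiff_slice_of_strip hf ht htT).differentiable hn x).hasDerivAt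

theorem continuousOn_pdx_strip (hT : 0 < T) (hf : ContDiffOn ℝ 1 (uncurry f) (strip T)) :
    ContinuousOn (uncurry (pdx f)) (strip T) := by
  have hfderiv := hf.continuousOn_fderivWithin (uniqueDiffOn_strip hT) le_rfl
  refine (hfderiv.clm_apply (continuousOn_const (c := ((1 : ℝ), (0 : ℝ))))).congr fun p hp => ?_
  have hslice : HasDerivWithinAt (fun y => (y, p.2)) ((1 : ℝ), (0 : ℝ)) univ p.1 :=
    ((hasDerivAt_id p.1).prodMk (hasDerivAt_const p.1 p.2)).hasDerivWithinAt
  exact ((hf.differentiableOn one_ne_zero p hp).hasFDerivWithinAt.comp_hasDerivWithinAt p.1 hslice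
    fun _ _ => hp).hasDerivAt univ_mem |>.deriv

end Strip

section PartialDerivatives

variable {f : ℝ → ℝ → ℝ} {x t : ℝ}

theorem hasDerivAt_slice_fst (hf : DifferentiableAt ℝ (uncurry f) (x, t)) :
    HasDerivAt (fun y => f y t) (pdx f x t) x :=
  (hf.comp x (g := uncurry f) (f := fun y => (y, t)) (by fun_prop)).hasDerivAt

theorem hasDerivAt_slice_snd (hf : DifferentiableAt ℝ (uncurry f) (x, t)) :
    HasDerivAt (fun s => f x s) (pdt f x t) t :=
  (hf.comp t (g := uncurry f) (f := fun s => (x, s)) (by fun_prop)).hasDerivAt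

theorem pdx_eq_fderiv (hf : DifferentiableAt ℝ (uncurry f) (x, t)) :
    pdx f x t = fderiv ℝ (uncurry f) (x, t) (1, 0) :=
  (HasFDerivAt.comp_hasDerivAt (l := uncurry f) x hf.hasFDerivAt
    ((hasDerivAt_id x).prodMk (hasDerivAt_const x t))).deriv

theorem pdt_eq_fderiv (hf : DifferentiableAt ℝ (uncurry f) (x, t)) :
    pdt f x t = fderiv ℝ (uncurry f) (x, t) (0, 1) :=
  (HasFDerivAt.comp_hasDerivAt (l := uncurry f) t hf.hasFDerivAt
    ((hasDerivAt_const t x).prodMk (hasDerivAt_id t))).deriv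

theorem hasDerivAt_line (hf : DifferentiableAt ℝ (uncurry f) (x, t)) (v : ℝ) :
    HasDerivAt (fun s => f (x + (s - t) * v) s) (pdt f x t + v * pdx f x t) t := by
  have hline : HasDerivAt (fun s => (x + (s - t) * v, s)) (v, 1) t := by
    simpa using ((((hasDerivAt_id t).sub_const t).mul_const v).const_add x).prodMk (hasDerivAt_id t)
  have hcomp := HasFDerivAt.comp_hasDerivAt_of_eq (l := uncurry f) t hf.hasFDerivAt hline (by simp)
  have hsplit : ((v, 1) : ℝ × ℝ) = (0, 1) + v • (1, 0) := by simp
  rwa [hsplit, map_add, map_smul, ← pdt_eq_fderiv hf, ← pdx_eq_fderiv hf] at hcomp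

theorem uncurry_pdx_eventuallyEq (hf : ContDiffAt ℝ 2 (uncurry f) (x, t)) :
    uncurry (pdx f) =ᶠ[𝓝 (x, t)] fun p => fderiv ℝ (uncurry f) p (1, 0) := by
  filter_upwards [hf.eventually (by simp)] with p hp
  exact pdx_eq_fderiv (hp.differentiableAt two_ne_zero)

theorem uncurry_pdt_eventuallyEq (hf : ContDiffAt ℝ 2 (uncurry f) (x, t)) :
    uncurry (pdt f) =ᶠ[𝓝 (x, t)] fun p => fderiv ℝ (uncurry f) p (0, 1) := by
  filter_upwards [hf.eventually (by simp)] with p hp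
  exact pdt_eq_fderiv (hp.differentiableAt two_ne_zero)

theorem differentiableAt_fderiv_apply (hf : ContDiffAt ℝ 2 (uncurry f) (x, t)) (e : ℝ × ℝ) :
    DifferentiableAt ℝ (fun p => fderiv ℝ (uncurry f) p e) (x, t) :=
  ((hf.fderiv_right (m := 1) (by norm_num)).differentiableAt one_ne_zero).clm_apply
    (differentiableAt_const e)

theorem differentiableAt_pdx (hf : ContDiffAt ℝ 2 (uncurry f) (x, t)) :
    DifferentiableAt ℝ (uncurry (pdx f)) (x, t) :=
  (differentiableAt_fderiv_apply hf (1, 0)).congr_of_eventuallyEq (uncurry_pdx_eventuallyEq hf)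

theorem differentiableAt_pdt (hf : ContDiffAt ℝ 2 (uncurry f) (x, t)) :
    DifferentiableAt ℝ (uncurry (pdt f)) (x, t) :=
  (differentiableAt_fderiv_apply hf (0, 1)).congr_of_eventuallyEq (uncurry_pdt_eventuallyEq hf)

theorem pdt_pdx_eq_pdx_pdt (hf : ContDiffAt ℝ 2 (uncurry f) (x, t)) :
    pdt (pdx f) x t = pdx (pdt f) x t := by
  have hfderiv : DifferentiableAt ℝ (fderiv ℝ (uncurry f)) (x, t) :=
    (hf.fderiv_right (m := 1) (by norm_num)).differentiableAt one_ne_zero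
  rw [pdt_eq_fderiv (differentiableAt_pdx hf), pdx_eq_fderiv (differentiableAt_pdt hf),
    (uncurry_pdx_eventuallyEq hf).fderiv_eq, (uncurry_pdt_eventuallyEq hf).fderiv_eq,
    fderiv_clm_apply hfderiv (differentiableAt_const _),
    fderiv_clm_apply hfderiv (differentiableAt_const _)]
  simpa using hf.isSymmSndFDerivAt (by simp) (0, 1) (1, 0)

end PartialDerivatives

/-! ### The state functions of a polytropic gas -/

section StateFunctions

variable {K cv γ : ℝ} {τ S : ℝ → ℝ → ℝ} {x t : ℝ}

theorem mF_pos (cv : ℝ) (S : ℝ → ℝ → ℝ) (x t : ℝ) : 0 < mF cv S x t := exp_pos _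

theorem sqrt_K_mul_gamma_pos (hK : 0 < K) (hγ : 1 < γ) : 0 < √(K * γ) :=
  Real.sqrt_pos.2 (mul_pos hK (by linarith))

theorem etaP_pos (hK : 0 < K) (hγ : 1 < γ) (hτ : 0 < τ x t) : 0 < etaP K γ τ x t :=
  mul_pos (div_pos (mul_pos two_pos (sqrt_K_mul_gamma_pos hK hγ)) (sub_pos.2 hγ))
    (rpow_pos_of_pos hτ _)

theorem KcC_pos (hK : 0 < K) (hγ : 1 < γ) : 0 < KcC K γ := by
  have hsqrt := sqrt_K_mul_gamma_pos hK hγ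
  have hγ1 : 0 < γ - 1 := sub_pos.2 hγ
  unfold KcC KtauC
  positivity

theorem etaP_eq_mul_cP (hτ : 0 < τ x t) :
    etaP K γ τ x t = 2 / (γ - 1) * cP K γ τ x t * τ x t := by
  have hpow : τ x t ^ (-(γ - 1) / 2) = τ x t ^ (-(γ + 1) / 2) * τ x t := by
    rw [← rpow_add_one hτ.ne']
    ring_nf
  rw [etaP, cP, hpow]
  ring

theorem cP_eq_mul_etaP_rpow (hK : 0 < K) (hγ : 1 < γ) (hτ : 0 < τ x t) :
    cP K γ τ x t = KcC K γ * etaP K γ τ x t ^ ((γ + 1) / (γ - 1)) := by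
  have hsqrt := sqrt_K_mul_gamma_pos hK hγ
  have hγ1 : 0 < γ - 1 := sub_pos.2 hγ
  set A := 2 * √(K * γ) / (γ - 1) with hA_def
  have hA : 0 < A := by positivity
  have hexp_τ : -(γ - 1) / 2 * ((γ + 1) / (γ - 1)) = -(γ + 1) / 2 := by field_simp
  have hexp_A : 2 / (γ - 1) * (-(γ + 1) / 2) = -((γ + 1) / (γ - 1)) := by field_simp
  rw [cP, KcC, KtauC, etaP, ← hA_def, mul_rpow hA.le (rpow_nonneg hτ.le _), ← rpow_mul hA.le,
    ← rpow_mul hτ.le, hexp_τ, hexp_A, rpow_neg hA.le]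
  field_simp

theorem cF_eq_mF_mul_cP (hK : 0 < K) (hγ : 1 < γ) (hτ : 0 < τ x t) :
    cF K cv γ τ S x t = mF cv S x t * cP K γ τ x t := by
  rw [cF, cP_eq_mul_etaP_rpow hK hγ hτ]
  ring

theorem cP_eq_mul_k1P (hK : 0 < K) (hγ : 1 < γ) (hτ : 0 < τ x t) :
    cP K γ τ x t = 2 * (γ - 1) / (γ + 1) * etaP K γ τ x t * k1P K γ τ x t := by
  have hγ1 : γ - 1 ≠ 0 := (sub_pos.2 hγ).ne'
  have hγ2 : γ + 1 ≠ 0 := by linarith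
  have hexp : (γ + 1) / (γ - 1) = 2 / (γ - 1) + 1 := by
    field_simp
    ring
  rw [cP_eq_mul_etaP_rpow hK hγ hτ, hexp, rpow_add_one (etaP_pos hK hγ hτ).ne', k1P]
  field_simp

theorem cP_mul_pdx_mF (hK : 0 < K) (hγ : 1 < γ) (hτ : 0 < τ x t) :
    cP K γ τ x t * pdx (mF cv S) x t = 2 * γ * k1P K γ τ x t * k2F K cv γ τ S x t := by
  have hγ0 : γ ≠ 0 := by linarith
  rw [cP_eq_mul_k1P hK hγ hτ, k2F]
  field_simp

theorem k1P_eq_k1e_mul (hK : 0 < K) (hγ : 1 < γ) (hτ : 0 < τ x t) (ε : ℝ) :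
    k1P K γ τ x t = k1e K γ ε τ x t * etaP K γ τ x t ^ (2 * ε / (γ - 1)) := by
  rw [k1P, k1e, mul_assoc, ← rpow_add (etaP_pos hK hγ hτ)]
  ring_nf

theorem k1e_pos (hK : 0 < K) (hγ : 1 < γ) (hτ : 0 < τ x t) (ε : ℝ) : 0 < k1e K γ ε τ x t :=
  mul_pos (div_pos (mul_pos (by linarith) (KcC_pos hK hγ)) (by linarith))
    (rpow_pos_of_pos (etaP_pos hK hγ hτ) _)

theorem k2e_eq_mul_k2F (hK : 0 < K) (hγ : 1 < γ) (hτ : 0 < τ x t) (ε : ℝ) :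
    k2e K cv γ ε τ S x t = etaP K γ τ x t ^ (2 * ε / (γ - 1)) * k2F K cv γ τ S x t := by
  rw [k2e, k2F, rpow_add (etaP_pos hK hγ hτ), rpow_one]
  ring

theorem pF_eq_mul_etaP (hK : 0 < K) (hγ : 1 < γ) (hτ : 0 < τ x t) :
    pF K cv γ τ S x t =
      (γ - 1) / (2 * γ) * mF cv S x t ^ 2 * (cP K γ τ x t * etaP K γ τ x t) := by
  have hγ0 : γ ≠ 0 := by linarith
  have hγ1 : γ - 1 ≠ 0 := (sub_pos.2 hγ).ne'
  have hm : exp (S x t / cv) = mF cv S x t ^ 2 := by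
    rw [mF, ← exp_nat_mul]
    congr 1
    push_cast
    ring
  have hc : cP K γ τ x t ^ 2 * τ x t = K * γ * τ x t ^ (-γ) := by
    rw [cP, mul_pow, sq_sqrt (by nlinarith), ← rpow_mul_natCast hτ.le, mul_assoc,
      ← rpow_add_one hτ.ne']
    push_cast
    ring_nf
  rw [etaP_eq_mul_cP hτ, pF, hm]
  field_simp
  linear_combination (- mF cv S x t ^ 2) * hc

theorem hasDerivAt_etaP (hγ : 1 < γ) {X Y : ℝ → ℝ} {s τ' : ℝ}
    (hτ : 0 < τ (X s) (Y s)) (hderiv : HasDerivAt (fun s => τ (X s) (Y s)) τ' s) :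
    HasDerivAt (fun s => etaP K γ τ (X s) (Y s)) (-cP K γ τ (X s) (Y s) * τ') s := by
  have hγ1 : γ - 1 ≠ 0 := (sub_pos.2 hγ).ne'
  refine ((hderiv.rpow_const (p := -(γ - 1) / 2) (.inl hτ.ne')).const_mul _).congr_deriv ?_
  rw [cP, show -(γ - 1) / 2 - 1 = -(γ + 1) / 2 by ring]
  field_simp

theorem cF_pos (hK : 0 < K) (hγ : 1 < γ) (hτ : 0 < τ x t) : 0 < cF K cv γ τ S x t :=
  mul_pos (mul_pos (KcC_pos hK hγ) (mF_pos cv S x t)) (rpow_pos_of_pos (etaP_pos hK hγ hτ) _)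

theorem cF_le_of_mF_mul_etaP_le {A B : ℝ} (hK : 0 < K) (hcv : 0 < cv) (hγ : 1 < γ)
    (hτ : 0 < τ x t) (hS : |S x t| ≤ A) (hB : mF cv S x t * etaP K γ τ x t ≤ B) :
    cF K cv γ τ S x t ≤
      KcC K γ * exp (A / (2 * cv)) * (exp (A / (2 * cv)) * B) ^ ((γ + 1) / (γ - 1)) := by
  obtain ⟨hSlower, hSupper⟩ := abs_le.1 hS
  have hη : 0 < etaP K γ τ x t := etaP_pos hK hγ hτ
  have hm_upper : mF cv S x t ≤ exp (A / (2 * cv)) := exp_le_exp.2 (by gcongr)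
  have hm_lower : 1 ≤ exp (A / (2 * cv)) * mF cv S x t := by
    rw [mF, ← exp_add, ← add_div]
    exact one_le_exp (div_nonneg (by linarith) (by linarith))
  have hη_upper : etaP K γ τ x t ≤ exp (A / (2 * cv)) * B :=
    calc etaP K γ τ x t ≤ exp (A / (2 * cv)) * mF cv S x t * etaP K γ τ x t :=
          le_mul_of_one_le_left hη.le hm_lower
      _ ≤ exp (A / (2 * cv)) * B := by
          rw [mul_assoc]
          gcongr
  have hKc := KcC_pos hK hγ
  have hexp : 0 ≤ (γ + 1) / (γ - 1) := div_nonneg (by linarith) (by linarith)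
  rw [cF]
  gcongr

theorem etaP_le_of_one_div_le {C : ℝ} (hγ : 1 < γ) (hτ : 0 < τ x t) (hC : 1 / τ x t ≤ C) :
    etaP K γ τ x t ≤ 2 * √(K * γ) / (γ - 1) * C ^ ((γ - 1) / 2) := by
  have hγ1 : 0 < γ - 1 := sub_pos.2 hγ
  rw [etaP, neg_div, rpow_neg hτ.le, ← inv_rpow hτ.le, ← one_div]
  gcongr

end StateFunctions

/-! ### Classical solutions and their characteristic derivatives -/

/-- Classical solution of the compressible Euler equations on the strip, with polytropic constants
`K`, `c_v > 0` and `γ > 1`. The equations are imposed only at positive times, since the two-sided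
time derivatives at `t = 0` involve values outside the strip. -/
structure IsEulerSolution (K cv γ : ℝ) (T : EReal) (u τ S : ℝ → ℝ → ℝ) : Prop where
  K_pos : 0 < K
  cv_pos : 0 < cv
  one_lt_γ : 1 < γ
  contDiffOn_u : ContDiffOn ℝ 2 (uncurry u) (strip T)
  contDiffOn_τ : ContDiffOn ℝ 2 (uncurry τ) (strip T)
  contDiffOn_S : ContDiffOn ℝ 2 (uncurry S) (strip T)
  τ_pos : ∀ {x t : ℝ}, 0 ≤ t → (t : EReal) < T → 0 < τ x t
  euler : ∀ {x t : ℝ}, 0 < t → (t : EReal) < T → fullEuler K cv γ u τ S x t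

/-- The quantity `p_x / c`, by which the gradient variables `α` and `β` deviate from `u_x`. -/
def pressureGrad (K cv γ : ℝ) (τ S : ℝ → ℝ → ℝ) (x t : ℝ) : ℝ :=
  mF cv S x t * pdx (etaP K γ τ) x t + (γ - 1) / γ * pdx (mF cv S) x t * etaP K γ τ x t

/-- The gradient variable of the characteristic family `σ`: it is `α` for `σ = 1` and `β` for
`σ = -1`. -/
def charGrad (K cv γ : ℝ) (u τ S : ℝ → ℝ → ℝ) (σ x t : ℝ) : ℝ :=
  pdx u x t + σ * pressureGrad K cv γ τ S x t

/-- The weighted gradient variable of the characteristic family `σ`: it is `α_ε` for `σ = 1` and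
`β_ε` for `σ = -1`. -/
def weightedCharGrad (K cv γ ε : ℝ) (u τ S : ℝ → ℝ → ℝ) (σ x t : ℝ) : ℝ :=
  etaP K γ τ x t ^ (2 * ε / (γ - 1)) * charGrad K cv γ u τ S σ x t

/-- The Riemann variable `u + σ m η` up to the factor `σ = ±1`. -/
def riemannVar (K cv γ : ℝ) (u τ S : ℝ → ℝ → ℝ) (σ x t : ℝ) : ℝ :=
  σ * u x t + mF cv S x t * etaP K γ τ x t

/-- The derivative `f_t + σ c f_x` of `f` along the characteristics of the family `σ`. -/
def charDeriv (K cv γ : ℝ) (τ S : ℝ → ℝ → ℝ) (σ : ℝ) (f : ℝ → ℝ → ℝ) (x t : ℝ) : ℝ :=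
  pdt f x t + σ * cF K cv γ τ S x t * pdx f x t

theorem hasDerivAt_charDeriv (K cv γ : ℝ) (τ S : ℝ → ℝ → ℝ) (σ : ℝ) {f : ℝ → ℝ → ℝ} {x t : ℝ}
    (hf : DifferentiableAt ℝ (uncurry f) (x, t)) :
    HasDerivAt (fun s => f (x + (s - t) * (σ * cF K cv γ τ S x t)) s)
      (charDeriv K cv γ τ S σ f x t) t :=
  hasDerivAt_line hf _

theorem abs_eq_one_of_sq_eq_one {σ : ℝ} (hσ : σ ^ 2 = 1) : |σ| = 1 :=
  (pow_eq_one_iff_of_nonneg (abs_nonneg σ) two_ne_zero).1 (by rw [sq_abs, hσ])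

theorem intUnit_cast_sq (σ : ℤˣ) : ((σ : ℤ) : ℝ) ^ 2 = 1 := by
  rw [← Int.cast_pow, ← Units.val_pow_eq_pow_val, Int.units_sq, Units.val_one, Int.cast_one]

namespace IsEulerSolution

variable {K cv γ : ℝ} {T : EReal} {u τ S : ℝ → ℝ → ℝ} {x t : ℝ}

theorem contDiffOn_etaP (h : IsEulerSolution K cv γ T u τ S) :
    ContDiffOn ℝ 2 (uncurry (etaP K γ τ)) (strip T) :=
  contDiffOn_const.mul (h.contDiffOn_τ.rpow_const_of_ne fun _ hp => (h.τ_pos hp.1 hp.2).ne')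

theorem contDiffOn_mF (h : IsEulerSolution K cv γ T u τ S) :
    ContDiffOn ℝ 2 (uncurry (mF cv S)) (strip T) :=
  (h.contDiffOn_S.div_const _).exp

theorem contDiffOn_cP (h : IsEulerSolution K cv γ T u τ S) :
    ContDiffOn ℝ 2 (uncurry (cP K γ τ)) (strip T) :=
  contDiffOn_const.mul (h.contDiffOn_τ.rpow_const_of_ne fun _ hp => (h.τ_pos hp.1 hp.2).ne')

theorem contDiffAt_u (h : IsEulerSolution K cv γ T u τ S) (ht : 0 < t) (htT : (t : EReal) < T) :
    ContDiffAt ℝ 2 (uncurry u) (x, t) :=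
  h.contDiffOn_u.contDiffAt (strip_mem_nhds ht htT)

theorem contDiffAt_τ (h : IsEulerSolution K cv γ T u τ S) (ht : 0 < t) (htT : (t : EReal) < T) :
    ContDiffAt ℝ 2 (uncurry τ) (x, t) :=
  h.contDiffOn_τ.contDiffAt (strip_mem_nhds ht htT)

theorem contDiffAt_S (h : IsEulerSolution K cv γ T u τ S) (ht : 0 < t) (htT : (t : EReal) < T) :
    ContDiffAt ℝ 2 (uncurry S) (x, t) :=
  h.contDiffOn_S.contDiffAt (strip_mem_nhds ht htT)

theorem contDiffAt_etaP (h : IsEulerSolution K cv γ T u τ S) (ht : 0 < t)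
    (htT : (t : EReal) < T) : ContDiffAt ℝ 2 (uncurry (etaP K γ τ)) (x, t) :=
  h.contDiffOn_etaP.contDiffAt (strip_mem_nhds ht htT)

theorem contDiffAt_mF (h : IsEulerSolution K cv γ T u τ S) (ht : 0 < t) (htT : (t : EReal) < T) :
    ContDiffAt ℝ 2 (uncurry (mF cv S)) (x, t) :=
  h.contDiffOn_mF.contDiffAt (strip_mem_nhds ht htT)

theorem etaP_pos (h : IsEulerSolution K cv γ T u τ S) (ht : 0 ≤ t) (htT : (t : EReal) < T) :
    0 < etaP K γ τ x t :=
  _root_.etaP_pos h.K_pos h.one_lt_γ (h.τ_pos ht htT)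

theorem cF_eq (h : IsEulerSolution K cv γ T u τ S) (ht : 0 ≤ t) (htT : (t : EReal) < T) :
    cF K cv γ τ S x t = mF cv S x t * cP K γ τ x t :=
  cF_eq_mF_mul_cP h.K_pos h.one_lt_γ (h.τ_pos ht htT)

theorem contDiffOn_cF (h : IsEulerSolution K cv γ T u τ S) :
    ContDiffOn ℝ 2 (uncurry (cF K cv γ τ S)) (strip T) :=
  (h.contDiffOn_mF.mul h.contDiffOn_cP).congr fun _ hp => h.cF_eq hp.1 hp.2

theorem pdx_cP (h : IsEulerSolution K cv γ T u τ S) (ht : 0 ≤ t) (htT : (t : EReal) < T) :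
    pdx (cP K γ τ) x t =
      (γ + 1) / (γ - 1) * cP K γ τ x t / etaP K γ τ x t * pdx (etaP K γ τ) x t := by
  have hη : 0 < etaP K γ τ x t := h.etaP_pos ht htT
  have hη_deriv := hasDerivAt_pdx_of_strip (x := x) h.contDiffOn_etaP two_ne_zero ht htT
  have hslice : (fun y => cP K γ τ y t) =
      fun y => KcC K γ * etaP K γ τ y t ^ ((γ + 1) / (γ - 1)) :=
    funext fun y => cP_eq_mul_etaP_rpow h.K_pos h.one_lt_γ (h.τ_pos ht htT)
  rw [pdx, hslice, ((hη_deriv.rpow_const (.inl hη.ne')).const_mul _).deriv,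
    cP_eq_mul_etaP_rpow h.K_pos h.one_lt_γ (h.τ_pos ht htT), rpow_sub_one hη.ne']
  ring

theorem pdx_pF (h : IsEulerSolution K cv γ T u τ S) (ht : 0 ≤ t) (htT : (t : EReal) < T) :
    pdx (pF K cv γ τ S) x t = cF K cv γ τ S x t * pressureGrad K cv γ τ S x t := by
  have hγ0 : γ ≠ 0 := by linarith [h.one_lt_γ]
  have hγ1 : γ - 1 ≠ 0 := (sub_pos.2 h.one_lt_γ).ne'
  have hη : etaP K γ τ x t ≠ 0 := (h.etaP_pos ht htT).ne'
  have hslice {f : ℝ → ℝ → ℝ} (hf : ContDiffOn ℝ 2 (uncurry f) (strip T)) :=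
    hasDerivAt_pdx_of_strip (x := x) hf two_ne_zero ht htT
  have hp : (fun y => pF K cv γ τ S y t) = fun y =>
      (γ - 1) / (2 * γ) * mF cv S y t ^ 2 * (cP K γ τ y t * etaP K γ τ y t) :=
    funext fun y => pF_eq_mul_etaP h.K_pos h.one_lt_γ (h.τ_pos ht htT)
  have hderiv := (((hslice h.contDiffOn_mF).pow 2).const_mul ((γ - 1) / (2 * γ))).mul
    ((hslice h.contDiffOn_cP).mul (hslice h.contDiffOn_etaP))
  rw [pdx, hp]
  refine hderiv.deriv.trans ?_
  rw [h.pdx_cP ht htT, h.cF_eq ht htT, pressureGrad]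
  simp only [Nat.cast_ofNat, Pi.pow_apply, Pi.mul_apply]
  field_simp
  ring

theorem pdt_u (h : IsEulerSolution K cv γ T u τ S) (ht : 0 < t) (htT : (t : EReal) < T) :
    pdt u x t = -(cF K cv γ τ S x t * pressureGrad K cv γ τ S x t) := by
  rw [← h.pdx_pF ht.le htT]
  exact eq_neg_of_add_eq_zero_left (h.euler ht htT).2.1

theorem pdt_etaP (h : IsEulerSolution K cv γ T u τ S) (ht : 0 < t) (htT : (t : EReal) < T) :
    pdt (etaP K γ τ) x t = -(cP K γ τ x t * pdx u x t) := by
  have hτ_diff := (h.contDiffAt_τ (x := x) ht htT).differentiableAt two_ne_zero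
  rw [← sub_eq_zero.1 (h.euler ht htT).1, ← neg_mul]
  exact (hasDerivAt_etaP (X := fun _ => x) (Y := id) h.one_lt_γ (h.τ_pos ht.le htT)
    (hasDerivAt_slice_snd hτ_diff)).deriv

theorem S_eq_initial (h : IsEulerSolution K cv γ T u τ S) (ht : 0 ≤ t) (htT : (t : EReal) < T) :
    S x t = S x 0 := by
  rcases ht.eq_or_lt with rfl | ht'
  · rfl
  have hcont : ContinuousOn (fun s => S x s) (Icc 0 t) :=
    h.contDiffOn_S.continuousOn.comp (f := fun s => (x, s)) (by fun_prop)
      fun s hs => ⟨hs.1, (EReal.coe_le_coe_iff.2 hs.2).trans_lt htT⟩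
  have hlt {s : ℝ} (hs : s ∈ Ioo 0 t) : (s : EReal) < T := (EReal.coe_lt_coe_iff.2 hs.2).trans htT
  obtain ⟨s, hs, hslope⟩ := exists_deriv_eq_slope _ ht' hcont fun s hs =>
    (hasDerivAt_slice_snd (h.contDiffAt_S hs.1 (hlt hs)
      |>.differentiableAt two_ne_zero)).differentiableAt.differentiableWithinAt
  rw [show deriv (fun s => S x s) s = 0 from (h.euler hs.1 (hlt hs)).2.2] at hslope
  have hdiff := (div_eq_zero_iff.1 hslope.symm).resolve_right (sub_pos.2 ht').ne'
  exact sub_eq_zero.1 hdiff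

theorem pdt_mF (h : IsEulerSolution K cv γ T u τ S) (ht : 0 < t) (htT : (t : EReal) < T) :
    pdt (mF cv S) x t = 0 := by
  have hS := hasDerivAt_slice_snd (h.contDiffAt_S (x := x) ht htT |>.differentiableAt two_ne_zero)
  rw [(h.euler ht htT).2.2] at hS
  exact (hS.div_const (2 * cv)).exp.deriv.trans (by simp)

theorem charDeriv_riemannVar (h : IsEulerSolution K cv γ T u τ S) (ht : 0 < t)
    (htT : (t : EReal) < T) {σ : ℝ} (hσ : σ ^ 2 = 1) :
    charDeriv K cv γ τ S σ (riemannVar K cv γ u τ S σ) x t =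
      σ * cF K cv γ τ S x t * pdx (mF cv S) x t * etaP K γ τ x t / γ := by
  have hγ0 : γ ≠ 0 := by linarith [h.one_lt_γ]
  have hu := (h.contDiffAt_u (x := x) ht htT).differentiableAt two_ne_zero
  have hη := (h.contDiffAt_etaP (x := x) ht htT).differentiableAt two_ne_zero
  have hm := (h.contDiffAt_mF (x := x) ht htT).differentiableAt two_ne_zero
  have hdx : pdx (riemannVar K cv γ u τ S σ) x t = _ :=
    (((hasDerivAt_slice_fst hu).const_mul σ).add
      ((hasDerivAt_slice_fst hm).mul (hasDerivAt_slice_fst hη))).deriv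
  have hdt : pdt (riemannVar K cv γ u τ S σ) x t = _ :=
    (((hasDerivAt_slice_snd hu).const_mul σ).add
      ((hasDerivAt_slice_snd hm).mul (hasDerivAt_slice_snd hη))).deriv
  rw [charDeriv, hdx, hdt, h.pdt_u ht htT, h.pdt_etaP ht htT, h.pdt_mF ht htT, pressureGrad,
    h.cF_eq ht.le htT]
  field_simp
  linear_combination (γ * mF cv S x t * cP K γ τ x t * pdx u x t) * hσ

theorem charDeriv_etaP (h : IsEulerSolution K cv γ T u τ S) (ht : 0 < t)
    (htT : (t : EReal) < T) (σ : ℝ) :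
    charDeriv K cv γ τ S σ (etaP K γ τ) x t =
      -(2 * (γ - 1) / (γ + 1) * etaP K γ τ x t * k1P K γ τ x t)
        * (charGrad K cv γ u τ S (-σ) x t + σ * ((γ + 1) * k2F K cv γ τ S x t)) := by
  have hγ2 : γ + 1 ≠ 0 := by linarith [h.one_lt_γ]
  rw [charDeriv, h.pdt_etaP ht htT, h.cF_eq ht.le htT,
    ← cP_eq_mul_k1P h.K_pos h.one_lt_γ (h.τ_pos ht.le htT), charGrad, pressureGrad, k2F]
  field_simp
  ring

theorem differentiableAt_pressureGrad (h : IsEulerSolution K cv γ T u τ S) (ht : 0 < t)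
    (htT : (t : EReal) < T) :
    DifferentiableAt ℝ (uncurry (pressureGrad K cv γ τ S)) (x, t) := by
  have hη := h.contDiffAt_etaP (x := x) ht htT
  have hm := h.contDiffAt_mF (x := x) ht htT
  exact ((hm.differentiableAt two_ne_zero).mul (differentiableAt_pdx hη)).add
    (((differentiableAt_pdx hm).const_mul _).mul (hη.differentiableAt two_ne_zero))

theorem pdt_pdx_u (h : IsEulerSolution K cv γ T u τ S) (ht : 0 < t) (htT : (t : EReal) < T) :
    pdt (pdx u) x t = -(pdx (cF K cv γ τ S) x t * pressureGrad K cv γ τ S x t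
      + cF K cv γ τ S x t * pdx (pressureGrad K cv γ τ S) x t) := by
  have hc := hasDerivAt_pdx_of_strip (x := x) h.contDiffOn_cF two_ne_zero ht.le htT
  have hq := hasDerivAt_slice_fst (h.differentiableAt_pressureGrad (x := x) ht htT)
  rw [pdt_pdx_eq_pdx_pdt (h.contDiffAt_u ht htT), pdx]
  simp only [h.pdt_u ht htT]
  exact (hc.mul hq).neg.deriv

theorem pdt_pdx_etaP (h : IsEulerSolution K cv γ T u τ S) (ht : 0 < t) (htT : (t : EReal) < T) :
    pdt (pdx (etaP K γ τ)) x t =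
      -(pdx (cP K γ τ) x t * pdx u x t + cP K γ τ x t * pdx (pdx u) x t) := by
  have hc := hasDerivAt_pdx_of_strip (x := x) h.contDiffOn_cP two_ne_zero ht.le htT
  have hux := hasDerivAt_slice_fst (differentiableAt_pdx (h.contDiffAt_u (x := x) ht htT))
  rw [pdt_pdx_eq_pdx_pdt (h.contDiffAt_etaP ht htT), pdx]
  simp only [h.pdt_etaP ht htT]
  exact (hc.mul hux).neg.deriv

theorem pdt_pdx_mF (h : IsEulerSolution K cv γ T u τ S) (ht : 0 < t) (htT : (t : EReal) < T) :
    pdt (pdx (mF cv S)) x t = 0 := by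
  rw [pdt_pdx_eq_pdx_pdt (h.contDiffAt_mF ht htT), pdx]
  simp only [h.pdt_mF ht htT, deriv_const]

theorem pdx_cF (h : IsEulerSolution K cv γ T u τ S) (ht : 0 ≤ t) (htT : (t : EReal) < T) :
    pdx (cF K cv γ τ S) x t =
      pdx (mF cv S) x t * cP K γ τ x t + mF cv S x t * pdx (cP K γ τ) x t := by
  rw [pdx]
  simp only [h.cF_eq ht htT]
  exact ((hasDerivAt_pdx_of_strip h.contDiffOn_mF two_ne_zero ht htT).mul
    (hasDerivAt_pdx_of_strip h.contDiffOn_cP two_ne_zero ht htT)).deriv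

theorem pdt_pressureGrad (h : IsEulerSolution K cv γ T u τ S) (ht : 0 < t)
    (htT : (t : EReal) < T) :
    pdt (pressureGrad K cv γ τ S) x t =
      -((pdx (cF K cv γ τ S) x t - pdx (mF cv S) x t * cP K γ τ x t / γ) * pdx u x t
        + cF K cv γ τ S x t * pdx (pdx u) x t) := by
  have hγ0 : γ ≠ 0 := by linarith [h.one_lt_γ]
  have hη := h.contDiffAt_etaP (x := x) ht htT
  have hm := h.contDiffAt_mF (x := x) ht htT
  have hslice {f : ℝ → ℝ → ℝ} (hf : DifferentiableAt ℝ (uncurry f) (x, t)) :=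
    hasDerivAt_slice_snd hf
  have hdt : pdt (pressureGrad K cv γ τ S) x t = _ :=
    (((hslice (hm.differentiableAt two_ne_zero)).mul (hslice (differentiableAt_pdx hη))).add
      (((hslice (differentiableAt_pdx hm)).const_mul _).mul
        (hslice (hη.differentiableAt two_ne_zero)))).deriv
  rw [hdt, h.pdt_mF ht htT, h.pdt_pdx_mF ht htT, h.pdt_pdx_etaP ht htT, h.pdt_etaP ht htT,
    h.pdx_cF ht.le htT, h.cF_eq ht.le htT]
  field_simp
  ring

theorem charDeriv_charGrad (h : IsEulerSolution K cv γ T u τ S) (ht : 0 < t)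
    (htT : (t : EReal) < T) {σ : ℝ} (hσ : σ ^ 2 = 1) :
    charDeriv K cv γ τ S σ (charGrad K cv γ u τ S σ) x t =
      -σ * pdx (cF K cv γ τ S) x t * charGrad K cv γ u τ S σ x t
        + σ * (cP K γ τ x t * pdx (mF cv S) x t) / γ * pdx u x t := by
  have hux := differentiableAt_pdx (h.contDiffAt_u (x := x) ht htT)
  have hq := h.differentiableAt_pressureGrad (x := x) ht htT
  have hdx : pdx (charGrad K cv γ u τ S σ) x t = _ :=
    ((hasDerivAt_slice_fst hux).add ((hasDerivAt_slice_fst hq).const_mul σ)).deriv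
  have hdt : pdt (charGrad K cv γ u τ S σ) x t = _ :=
    ((hasDerivAt_slice_snd hux).add ((hasDerivAt_slice_snd hq).const_mul σ)).deriv
  rw [charDeriv, hdx, hdt, h.pdt_pdx_u ht htT, h.pdt_pressureGrad ht htT, charGrad]
  linear_combination (pdx (cF K cv γ τ S) x t * pressureGrad K cv γ τ S x t
    + cF K cv γ τ S x t * pdx (pressureGrad K cv γ τ S) x t) * hσ

theorem pdx_cF_eq_mul_k1P (h : IsEulerSolution K cv γ T u τ S) (ht : 0 ≤ t)
    (htT : (t : EReal) < T) :
    pdx (cF K cv γ τ S) x t =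
      2 * k1P K γ τ x t * (pressureGrad K cv γ τ S x t - k2F K cv γ τ S x t) := by
  have hγ0 : γ ≠ 0 := by linarith [h.one_lt_γ]
  have hγ1 : γ - 1 ≠ 0 := (sub_pos.2 h.one_lt_γ).ne'
  have hγ2 : γ + 1 ≠ 0 := by linarith [h.one_lt_γ]
  have hη : etaP K γ τ x t ≠ 0 := (h.etaP_pos ht htT).ne'
  rw [h.pdx_cF ht htT, h.pdx_cP ht htT, cP_eq_mul_k1P h.K_pos h.one_lt_γ (h.τ_pos ht htT),
    pressureGrad, k2F]
  field_simp
  ring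

theorem charDeriv_charGrad_riccati (h : IsEulerSolution K cv γ T u τ S) (ht : 0 < t)
    (htT : (t : EReal) < T) {σ : ℝ} (hσ : σ ^ 2 = 1) :
    charDeriv K cv γ τ S σ (charGrad K cv γ u τ S σ) x t =
      k1P K γ τ x t * (σ * k2F K cv γ τ S x t *
          (3 * charGrad K cv γ u τ S σ x t + charGrad K cv γ u τ S (-σ) x t)
        + charGrad K cv γ u τ S σ x t * charGrad K cv γ u τ S (-σ) x t
        - charGrad K cv γ u τ S σ x t ^ 2) := by
  have hγ0 : γ ≠ 0 := by linarith [h.one_lt_γ]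
  rw [h.charDeriv_charGrad ht htT hσ, h.pdx_cF_eq_mul_k1P ht.le htT,
    cP_mul_pdx_mF h.K_pos h.one_lt_γ (h.τ_pos ht.le htT), charGrad, charGrad]
  field_simp
  ring

theorem differentiableAt_etaP_rpow (h : IsEulerSolution K cv γ T u τ S) (ht : 0 < t)
    (htT : (t : EReal) < T) (r : ℝ) :
    DifferentiableAt ℝ (uncurry fun x t => etaP K γ τ x t ^ r) (x, t) :=
  ((h.contDiffAt_etaP ht htT).differentiableAt two_ne_zero).rpow_const
    (.inl (h.etaP_pos ht.le htT).ne')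

theorem differentiableAt_charGrad (h : IsEulerSolution K cv γ T u τ S) (ht : 0 < t)
    (htT : (t : EReal) < T) (σ : ℝ) :
    DifferentiableAt ℝ (uncurry (charGrad K cv γ u τ S σ)) (x, t) :=
  (differentiableAt_pdx (h.contDiffAt_u ht htT)).add
    ((h.differentiableAt_pressureGrad ht htT).const_mul σ)

theorem charDeriv_etaP_rpow (h : IsEulerSolution K cv γ T u τ S) (ht : 0 < t)
    (htT : (t : EReal) < T) (σ ε : ℝ) :
    charDeriv K cv γ τ S σ (fun x t => etaP K γ τ x t ^ (2 * ε / (γ - 1))) x t =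
      -(4 * ε / (γ + 1)) * etaP K γ τ x t ^ (2 * ε / (γ - 1)) * k1P K γ τ x t
        * (charGrad K cv γ u τ S (-σ) x t + σ * ((γ + 1) * k2F K cv γ τ S x t)) := by
  have hγ1 : γ - 1 ≠ 0 := (sub_pos.2 h.one_lt_γ).ne'
  have hη_pos : 0 < etaP K γ τ x t := h.etaP_pos ht.le htT
  have hη := (h.contDiffAt_etaP (x := x) ht htT).differentiableAt two_ne_zero
  refine (hasDerivAt_charDeriv K cv γ τ S σ (h.differentiableAt_etaP_rpow ht htT _)).unique
    (((hasDerivAt_charDeriv K cv γ τ S σ hη).rpow_const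
      (.inl (by simpa using hη_pos.ne'))).congr_deriv ?_)
  simp only [sub_self, zero_mul, add_zero]
  rw [h.charDeriv_etaP ht htT, rpow_sub_one hη_pos.ne']
  field_simp
  ring

theorem differentiableAt_weightedCharGrad (h : IsEulerSolution K cv γ T u τ S) (ht : 0 < t)
    (htT : (t : EReal) < T) (ε σ : ℝ) :
    DifferentiableAt ℝ (uncurry (weightedCharGrad K cv γ ε u τ S σ)) (x, t) :=
  (h.differentiableAt_etaP_rpow ht htT _).mul (h.differentiableAt_charGrad ht htT σ)

theorem charDeriv_weightedCharGrad (h : IsEulerSolution K cv γ T u τ S) (ht : 0 < t)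
    (htT : (t : EReal) < T) (ε : ℝ) {σ : ℝ} (hσ : σ ^ 2 = 1) :
    charDeriv K cv γ τ S σ (weightedCharGrad K cv γ ε u τ S σ) x t =
      k1e K γ ε τ x t * (σ * k2e K cv γ ε τ S x t *
          ((3 - 4 * ε) * weightedCharGrad K cv γ ε u τ S σ x t
            + weightedCharGrad K cv γ ε u τ S (-σ) x t)
        + (1 - 4 * ε / (γ + 1)) * (weightedCharGrad K cv γ ε u τ S σ x t
            * weightedCharGrad K cv γ ε u τ S (-σ) x t)
        - weightedCharGrad K cv γ ε u τ S σ x t ^ 2) := by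
  have hγ2 : γ + 1 ≠ 0 := by linarith [h.one_lt_γ]
  have hτ : 0 < τ x t := h.τ_pos ht.le htT
  have hweight := h.differentiableAt_etaP_rpow (x := x) ht htT (2 * ε / (γ - 1))
  have hgrad := h.differentiableAt_charGrad (x := x) ht htT σ
  refine (hasDerivAt_charDeriv K cv γ τ S σ
    (h.differentiableAt_weightedCharGrad ht htT ε σ)).unique
    (((hasDerivAt_charDeriv K cv γ τ S σ hweight).mul
      (hasDerivAt_charDeriv K cv γ τ S σ hgrad)).congr_deriv ?_)
  simp only [sub_self, zero_mul, add_zero]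
  rw [h.charDeriv_etaP_rpow ht htT, h.charDeriv_charGrad_riccati ht htT hσ,
    k1P_eq_k1e_mul h.K_pos h.one_lt_γ hτ ε, k2e_eq_mul_k2F h.K_pos h.one_lt_γ hτ]
  simp only [weightedCharGrad]
  field_simp
  ring

theorem abs_mul_cF (h : IsEulerSolution K cv γ T u τ S) (ht : 0 ≤ t) (htT : (t : EReal) < T)
    {σ : ℝ} (hσ : σ ^ 2 = 1) : |σ * cF K cv γ τ S x t| = cF K cv γ τ S x t := by
  rw [abs_mul, abs_eq_one_of_sq_eq_one hσ, one_mul,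
    abs_of_pos (cF_pos h.K_pos h.one_lt_γ (h.τ_pos ht htT))]

theorem pdx_mF (h : IsEulerSolution K cv γ T u τ S) (ht : 0 ≤ t) (htT : (t : EReal) < T) :
    pdx (mF cv S) x t = mF cv S x t * (deriv (fun y => S y 0) x / (2 * cv)) := by
  have hS := hasDerivAt_pdx_of_strip (x := x) h.contDiffOn_S two_ne_zero ht htT
  have hS_initial : pdx S x t = deriv (fun y => S y 0) x := by
    simp only [pdx, h.S_eq_initial ht htT]
  exact hS_initial ▸ (hS.div_const (2 * cv)).exp.deriv

theorem contDiffOn_riemannVar (h : IsEulerSolution K cv γ T u τ S) (σ : ℝ) :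
    ContDiffOn ℝ 2 (uncurry (riemannVar K cv γ u τ S σ)) (strip T) :=
  (contDiffOn_const.mul h.contDiffOn_u).add (h.contDiffOn_mF.mul h.contDiffOn_etaP)

theorem charDeriv_riemannVar_le (h : IsEulerSolution K cv γ T u τ S) (ht : 0 < t)
    (htT : (t : EReal) < T) {σ : ℝ} (hσ : σ ^ 2 = 1) {B : ℝ}
    (hB : mF cv S x t * etaP K γ τ x t ≤ B) :
    charDeriv K cv γ τ S σ (riemannVar K cv γ u τ S σ) x t ≤
      cF K cv γ τ S x t * (B * |deriv (fun y => S y 0) x| / (2 * cv * γ)) := by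
  have hγ0 : 0 < γ := by linarith [h.one_lt_γ]
  have hcv := h.cv_pos
  have hc : 0 < cF K cv γ τ S x t := cF_pos h.K_pos h.one_lt_γ (h.τ_pos ht.le htT)
  have hmη : 0 < mF cv S x t * etaP K γ τ x t := mul_pos (mF_pos cv S x t) (h.etaP_pos ht.le htT)
  have hsource : σ * deriv (fun y => S y 0) x ≤ |deriv (fun y => S y 0) x| := by
    refine (le_abs_self _).trans_eq ?_
    rw [abs_mul, abs_eq_one_of_sq_eq_one hσ, one_mul]
  rw [h.charDeriv_riemannVar ht htT hσ, h.pdx_mF ht.le htT]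
  calc _ = cF K cv γ τ S x t * (mF cv S x t * etaP K γ τ x t
          * (σ * deriv (fun y => S y 0) x) / (2 * cv * γ)) := by field_simp
    _ ≤ cF K cv γ τ S x t * (mF cv S x t * etaP K γ τ x t
          * |deriv (fun y => S y 0) x| / (2 * cv * γ)) := by gcongr
    _ ≤ _ := by gcongr

end IsEulerSolution

/-! ### Bounded wave speed -/

/-- How far the Riemann variable of the family `σ` exceeds a barrier of height about `2M`. The
barrier grows along characteristics, at the rate of `V` in space and slowly in time; since `V`
enters the barriers of the two families with opposite signs, it cancels in their sum `2mη`. -/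
def barrierExcess (K cv γ : ℝ) (u τ S : ℝ → ℝ → ℝ) (V : ℝ → ℝ) (M t₀ σ x t : ℝ) : ℝ :=
  riemannVar K cv γ u τ S σ x t - M * (2 + σ * V x + t / (t₀ + 1))

section BarrierExcess

variable {K cv γ : ℝ} {u τ S : ℝ → ℝ → ℝ} {V : ℝ → ℝ} {M t₀ x t : ℝ}

theorem mF_mul_etaP_le_of_barrierExcess_nonpos (hM : 0 ≤ M) (ht : t ∈ Icc 0 t₀)
    (hpos : barrierExcess K cv γ u τ S V M t₀ 1 x t ≤ 0)
    (hneg : barrierExcess K cv γ u τ S V M t₀ (-1) x t ≤ 0) :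
    mF cv S x t * etaP K γ τ x t ≤ 3 * M := by
  have htime : M * (t / (t₀ + 1)) ≤ M :=
    mul_le_of_le_one_right hM ((div_le_one (by linarith [ht.1, ht.2])).2 (by linarith [ht.2]))
  simp only [barrierExcess, riemannVar] at hpos hneg
  linarith

theorem barrierExcess_neg (hM : 0 ≤ M) (ht : t ∈ Icc 0 t₀) (hV : |V x| ≤ 1) {σ : ℝ}
    (hσ : σ ^ 2 = 1) (hdata : |u x t| + mF cv S x t * etaP K γ τ x t < M) :
    barrierExcess K cv γ u τ S V M t₀ σ x t < 0 := by
  have hu : σ * u x t ≤ |u x t| :=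
    (le_abs_self _).trans_eq (by rw [abs_mul, abs_eq_one_of_sq_eq_one hσ, one_mul])
  have hσV : |σ * V x| ≤ 1 := by rwa [abs_mul, abs_eq_one_of_sq_eq_one hσ, one_mul]
  have htime : 0 ≤ t / (t₀ + 1) := div_nonneg ht.1 (by linarith [ht.1, ht.2])
  have hbarrier : M ≤ M * (2 + σ * V x + t / (t₀ + 1)) :=
    le_mul_of_one_le_right hM (by linarith [(abs_le.1 hσV).1])
  rw [barrierExcess, riemannVar]
  linarith

end BarrierExcess

namespace IsEulerSolution

variable {K cv γ : ℝ} {T : EReal} {u τ S : ℝ → ℝ → ℝ} {V : ℝ → ℝ} {C M t₀ x t : ℝ}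

theorem exists_hasDerivAt_barrierExcess_neg (h : IsEulerSolution K cv γ T u τ S) (ht : 0 < t)
    (htT : (t : EReal) < T) (hM : 0 < M) (ht₀ : 0 ≤ t₀)
    (hV : HasDerivAt V (3 / (2 * cv * γ) * |deriv (fun y => S y 0) x|) x)
    (hmη : mF cv S x t * etaP K γ τ x t ≤ 3 * M) {σ : ℝ} (hσ : σ ^ 2 = 1) :
    ∃ d < 0, HasDerivAt
      (fun s => barrierExcess K cv γ u τ S V M t₀ σ (x + (s - t) * (σ * cF K cv γ τ S x t)) s)
      d t := by
  have hriemann := hasDerivAt_charDeriv K cv γ τ S σ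
    ((h.contDiffOn_riemannVar σ).contDiffAt (strip_mem_nhds (x := x) ht htT)
      |>.differentiableAt two_ne_zero)
  have hline : HasDerivAt (fun s => x + (s - t) * (σ * cF K cv γ τ S x t))
      (σ * cF K cv γ τ S x t) t := by
    simpa using (((hasDerivAt_id t).sub_const t).mul_const _).const_add x
  have hbarrier := (((hV.comp_of_eq t hline (by simp)).const_mul σ).const_add 2).add
    ((hasDerivAt_id t).div_const (t₀ + 1)) |>.const_mul M
  refine ⟨_, ?_, hriemann.sub hbarrier⟩
  have hgrowth : M * (σ * (3 / (2 * cv * γ) * |deriv (fun y => S y 0) x| *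
        (σ * cF K cv γ τ S x t)) + 1 / (t₀ + 1)) =
      cF K cv γ τ S x t * (3 * M * |deriv (fun y => S y 0) x| / (2 * cv * γ)) + M / (t₀ + 1) := by
    linear_combination
      (M * (3 / (2 * cv * γ) * |deriv (fun y => S y 0) x|) * cF K cv γ τ S x t) * hσ
  rw [hgrowth]
  have htime : 0 < M / (t₀ + 1) := by positivity
  linarith [h.charDeriv_riemannVar_le ht htT hσ hmη]

theorem mF_mul_etaP_le_of_barrier (h : IsEulerSolution K cv γ T u τ S) {I : Set ℝ}
    (hI : IsClosed I) (hV : ∀ x, HasDerivAt V (3 / (2 * cv * γ) * |deriv (fun y => S y 0) x|) x)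
    (hV_le : ∀ x ∈ I, |V x| ≤ 1) {L : ℝ} (hL : 0 ≤ L) (hM : 0 < M) (ht₀T : (t₀ : EReal) < T)
    (hspeed : ∀ x ∈ I, ∀ t ∈ Icc 0 t₀, mF cv S x t * etaP K γ τ x t ≤ 3 * M → cF K cv γ τ S x t ≤ L)
    (hdata : ∀ x ∈ I, ∀ t ∈ Icc 0 t₀, t = 0 ∨ x ∈ frontier I →
      |u x t| + mF cv S x t * etaP K γ τ x t < M) (hx : x ∈ I) (ht₀ : 0 ≤ t₀) :
    mF cv S x t₀ * etaP K γ τ x t₀ ≤ 3 * M := by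
  have hmη_le {x t : ℝ} (ht : t ∈ Icc 0 t₀)
      (hF : ∀ σ : ℤˣ, barrierExcess K cv γ u τ S V M t₀ (σ : ℤ) x t ≤ 0) :
      mF cv S x t * etaP K γ τ x t ≤ 3 * M :=
    mF_mul_etaP_le_of_barrierExcess_nonpos hM.le ht (by simpa using hF 1) (by simpa using hF (-1))
  refine hmη_le ⟨ht₀, le_rfl⟩ fun σ => (neg_of_backward_increasing hI hL hx ht₀
    (F := fun σ : ℤˣ => barrierExcess K cv γ u τ S V M t₀ (σ : ℤ)) ?_ ?_ ?_ σ).le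
  · intro σ
    have hV_cont : Continuous V := continuous_iff_continuousAt.2 fun x => (hV x).continuousAt
    exact ((h.contDiffOn_riemannVar _).continuousOn.mono (backwardCone_subset_strip ht₀T)).sub
      (by fun_prop)
  · intro σ y t hp hbd
    exact barrierExcess_neg hM.le hp.2.1 (hV_le y hp.1) (intUnit_cast_sq σ)
      (hdata y hp.1 t hp.2.1 hbd)
  · intro σ y t hp ht hle _
    have htT := (backwardCone_subset_strip ht₀T hp).2
    have hmη := hmη_le hp.2.1 hle
    obtain ⟨d, hd, hderiv⟩ :=
      h.exists_hasDerivAt_barrierExcess_neg ht htT hM ht₀ (hV y) hmη (intUnit_cast_sq σ)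
    exact ⟨_, d, (h.abs_mul_cF ht.le htT (intUnit_cast_sq σ)).trans_le
      (hspeed y hp.1 t hp.2.1 hmη), hd, hderiv⟩

theorem exists_abs_u_add_mF_mul_etaP_initial_le (h : IsEulerSolution K cv γ T u τ S) (hT : 0 < T)
    (hu : ∀ x, |u x 0| ≤ C) (hρ : ∀ x, 1 / τ x 0 ≤ C) {A : ℝ} (hS : ∀ x, |S x 0| ≤ A) :
    ∃ M, ∀ x, |u x 0| + mF cv S x 0 * etaP K γ τ x 0 ≤ M := by
  have hcv := h.cv_pos
  refine ⟨C + exp (A / (2 * cv)) * (2 * √(K * γ) / (γ - 1) * C ^ ((γ - 1) / 2)), fun x => ?_⟩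
  have hτ : 0 < τ x 0 := h.τ_pos le_rfl (by simpa using hT)
  have hη : 0 < etaP K γ τ x 0 := _root_.etaP_pos h.K_pos h.one_lt_γ hτ
  have hm : mF cv S x 0 ≤ exp (A / (2 * cv)) := exp_le_exp.2 (by gcongr; exact le_of_abs_le (hS x))
  gcongr
  · exact hu x
  · exact etaP_le_of_one_div_le h.one_lt_γ hτ (hρ x)

theorem exists_abs_u_add_mF_mul_etaP_lt (h : IsEulerSolution K cv γ T u τ S) (hT : 0 < T)
    (hu : ∀ x, |u x 0| ≤ C) (hρ : ∀ x, 1 / τ x 0 ≤ C) {A : ℝ} (hS : ∀ x, |S x 0| ≤ A)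
    {Q : Set (ℝ × ℝ)} (hQ : IsCompact Q) (hQT : Q ⊆ strip T) :
    ∃ M, 0 < M ∧ (∀ x, |u x 0| + mF cv S x 0 * etaP K γ τ x 0 < M) ∧
      ∀ p ∈ Q, |u p.1 p.2| + mF cv S p.1 p.2 * etaP K γ τ p.1 p.2 < M := by
  have hcont : ContinuousOn (fun p : ℝ × ℝ =>
      |u p.1 p.2| + mF cv S p.1 p.2 * etaP K γ τ p.1 p.2) (strip T) :=
    h.contDiffOn_u.continuousOn.abs.add
      (h.contDiffOn_mF.continuousOn.mul h.contDiffOn_etaP.continuousOn)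
  obtain ⟨M₀, hM₀⟩ := h.exists_abs_u_add_mF_mul_etaP_initial_le hT hu hρ hS
  obtain ⟨M₁, hM₁⟩ := hQ.bddAbove_image (hcont.mono hQT)
  have hinitial (x : ℝ) : |u x 0| + mF cv S x 0 * etaP K γ τ x 0 < max M₀ M₁ + 1 :=
    (hM₀ x).trans_lt (by linarith [le_max_left M₀ M₁])
  have hpos : 0 < |u 0 0| + mF cv S 0 0 * etaP K γ τ 0 0 :=
    add_pos_of_nonneg_of_pos (abs_nonneg _)
      (mul_pos (mF_pos cv S 0 0) (h.etaP_pos le_rfl (by simpa using hT)))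
  exact ⟨max M₀ M₁ + 1, hpos.trans (hinitial 0), hinitial, fun p hp =>
    (hM₁ (mem_image_of_mem _ hp)).trans_lt (by linarith [le_max_right M₀ M₁])⟩

theorem exists_cF_le_of_mF_mul_etaP_le (h : IsEulerSolution K cv γ T u τ S) {A : ℝ}
    (hS : ∀ x, |S x 0| ≤ A) {B : ℝ} (hB : 0 ≤ B) :
    ∃ L, 0 ≤ L ∧ ∀ x t : ℝ, 0 ≤ t → (t : EReal) < T → mF cv S x t * etaP K γ τ x t ≤ B →
      cF K cv γ τ S x t ≤ L := by
  have hKc := KcC_pos h.K_pos h.one_lt_γ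
  refine ⟨_, by positivity, fun x t ht htT => cF_le_of_mF_mul_etaP_le (A := A) h.K_pos h.cv_pos
    h.one_lt_γ (h.τ_pos ht htT) ?_⟩
  rw [h.S_eq_initial ht htT]
  exact hS x

theorem exists_barrier_slope_bounded (h : IsEulerSolution K cv γ T u τ S) (hT : 0 < T)
    (hBV : BoundedVariationOn (fun x => S x 0) univ) :
    (∃ V R, (∀ x, HasDerivAt V (3 / (2 * cv * γ) * |deriv (fun y => S y 0) x|) x) ∧
      ∀ x ∈ Ici R, |V x| ≤ 1) ∧
    ∃ V R, (∀ x, HasDerivAt V (3 / (2 * cv * γ) * |deriv (fun y => S y 0) x|) x) ∧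
      ∀ x ∈ Iic R, |V x| ≤ 1 := by
  have hcont : Continuous (deriv fun y => S y 0) :=
    (contDiff_slice_of_strip h.contDiffOn_S le_rfl (by simpa using hT)).continuous_deriv
      one_le_two
  obtain ⟨⟨V, hV, hV_top⟩, W, hW, hW_bot⟩ := exists_antideriv_tendsto_zero
    (hcont.abs.const_mul (3 / (2 * cv * γ)))
    ((integrable_deriv_of_boundedVariationOn hBV).abs.const_mul _)
  obtain ⟨R, hR⟩ := eventually_atTop.1 (hV_top.abs.eventually_le_const (u := 1) (by simp))
  obtain ⟨R', hR'⟩ := eventually_atBot.1 (hW_bot.abs.eventually_le_const (u := 1) (by simp))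
  exact ⟨⟨V, R, hV, hR⟩, W, R', hW, hR'⟩

theorem exists_mF_mul_etaP_le (h : IsEulerSolution K cv γ T u τ S) (hu : ∀ x, |u x 0| ≤ C)
    (hρ : ∀ x, 1 / τ x 0 ≤ C) (hBV : BoundedVariationOn (fun x => S x 0) univ) (ht₀ : 0 ≤ t₀)
    (ht₀T : (t₀ : EReal) < T) :
    ∃ B, 0 ≤ B ∧ ∀ x, ∀ t ∈ Icc 0 t₀, mF cv S x t * etaP K γ τ x t ≤ B := by
  have hlt {t : ℝ} (ht : t ∈ Icc 0 t₀) : (t : EReal) < T :=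
    (EReal.coe_le_coe_iff.2 ht.2).trans_lt ht₀T
  have hT : 0 < T := by simpa using hlt ⟨le_rfl, ht₀⟩
  obtain ⟨⟨V, R, hV, hV_le⟩, W, R', hW, hW_le⟩ := h.exists_barrier_slope_bounded hT hBV
  obtain ⟨A, hA⟩ := exists_abs_le_of_boundedVariationOn hBV
  obtain ⟨M, hM, hinitial, hbox⟩ := h.exists_abs_u_add_mF_mul_etaP_lt hT hu hρ hA
    (isCompact_uIcc (a := R') (b := R) |>.prod (isCompact_Icc (a := 0) (b := t₀)))
    fun p hp => ⟨hp.2.1, hlt hp.2⟩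
  obtain ⟨L, hL, hspeed⟩ := h.exists_cF_le_of_mF_mul_etaP_le hA (B := 3 * M) (by positivity)
  have houter {I : Set ℝ} (hI : IsClosed I) {V : ℝ → ℝ}
      (hV : ∀ x, HasDerivAt V (3 / (2 * cv * γ) * |deriv (fun y => S y 0) x|) x)
      (hV_le : ∀ x ∈ I, |V x| ≤ 1) (hfrontier : frontier I ⊆ uIcc R' R) {x t : ℝ} (hx : x ∈ I)
      (ht : t ∈ Icc 0 t₀) : mF cv S x t * etaP K γ τ x t ≤ 3 * M := by
    have hsub {s : ℝ} (hs : s ∈ Icc 0 t) : s ∈ Icc 0 t₀ := ⟨hs.1, hs.2.trans ht.2⟩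
    refine h.mF_mul_etaP_le_of_barrier hI hV hV_le hL hM (hlt ht)
      (fun y _ s hs => hspeed y s hs.1 (hlt (hsub hs))) (fun y _ s hs hbd => ?_) hx ht.1
    rcases hbd with rfl | hy
    · exact hinitial y
    · exact hbox (y, s) ⟨hfrontier hy, hsub hs⟩
  refine ⟨3 * M, by positivity, fun x t ht => ?_⟩
  by_cases hx : x ∈ uIcc R' R
  · linarith [hbox (x, t) ⟨hx, ht⟩, abs_nonneg (u x t)]
  rcases le_total R x with hxR | hxR
  · exact houter isClosed_Ici hV hV_le (by simp) hxR ht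
  · have hxR' : x ≤ R' := not_lt.1 fun hR' => hx (Icc_subset_uIcc ⟨hR'.le, hxR⟩)
    exact houter isClosed_Iic hW hW_le (by simp) hxR' ht

theorem exists_cF_le (h : IsEulerSolution K cv γ T u τ S) (hu : ∀ x, |u x 0| ≤ C)
    (hρ : ∀ x, 1 / τ x 0 ≤ C) (hBV : BoundedVariationOn (fun x => S x 0) univ) (ht₀ : 0 ≤ t₀)
    (ht₀T : (t₀ : EReal) < T) :
    ∃ L, 0 ≤ L ∧ ∀ x, ∀ t ∈ Icc 0 t₀, cF K cv γ τ S x t ≤ L := by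
  obtain ⟨B, hB, hmη⟩ := h.exists_mF_mul_etaP_le hu hρ hBV ht₀ ht₀T
  obtain ⟨A, hA⟩ := exists_abs_le_of_boundedVariationOn hBV
  obtain ⟨L, hL, hspeed⟩ := h.exists_cF_le_of_mF_mul_etaP_le hA hB
  exact ⟨L, hL, fun x t ht =>
    hspeed x t ht.1 ((EReal.coe_le_coe_iff.2 ht.2).trans_lt ht₀T) (hmη x t ht)⟩

end IsEulerSolution

/-! ### The invariant upper bound -/

theorem riccati_bracket_neg {γ ε κ N k b : ℝ} (hγ : 1 < γ) (hε : 0 < ε) (hεγ : 4 * ε < γ + 1)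
    (hk : |k| ≤ κ) (hN : max ((γ + 1) * |1 - ε| * κ / ε) (κ / (1 - 4 * ε / (γ + 1))) < N)
    (hb : b ≤ N) :
    k * ((3 - 4 * ε) * N + b) + (1 - 4 * ε / (γ + 1)) * (N * b) - N ^ 2 < 0 := by
  have hγ2 : 0 < γ + 1 := by linarith
  have hκ : 0 ≤ κ := (abs_nonneg k).trans hk
  obtain ⟨hN₁, hN₂⟩ := max_lt_iff.1 hN
  have hN_pos : 0 < N := lt_of_le_of_lt (by positivity) hN₁
  set r := 4 * ε / (γ + 1) with hr_def
  have hr : 0 < 1 - r := sub_pos.2 ((div_lt_one hγ2).2 hεγ)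
  have hcoeff : 0 < k + (1 - r) * N := by
    linarith [(div_lt_iff₀' hr).1 hN₂, neg_le_of_abs_le hk]
  have hdamping : 4 * (1 - ε) * k < r * N := by
    have hκN : (γ + 1) * |1 - ε| * κ < N * ε := (div_lt_iff₀ hε).1 hN₁
    have hk' : (1 - ε) * k ≤ |1 - ε| * κ :=
      (le_abs_self _).trans ((abs_mul _ _).trans_le (by gcongr))
    rw [hr_def, div_mul_eq_mul_div, lt_div_iff₀ hγ2]
    linarith [mul_le_mul_of_nonneg_left hk' hγ2.le]
  calc k * ((3 - 4 * ε) * N + b) + (1 - r) * (N * b) - N ^ 2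
      = (k + (1 - r) * N) * b + ((3 - 4 * ε) * k - N) * N := by ring
    _ ≤ (k + (1 - r) * N) * N + ((3 - 4 * ε) * k - N) * N := by gcongr
    _ = (4 * (1 - ε) * k - r * N) * N := by ring
    _ < 0 := mul_neg_of_neg_of_pos (sub_neg.2 hdamping) hN_pos

theorem riccati_threshold_le {γ ε κ : ℝ} (hγ : 1 < γ) (hε : 0 < ε) (hε4 : ε < 1 / 4) (hκ : 0 ≤ κ) :
    max ((γ + 1) * |1 - ε| * κ / ε) (κ / (1 - 4 * ε / (γ + 1))) ≤
      max (4 * (γ + 1) * κ / ε) (2 * κ / (1 - 4 * ε / (γ + 1))) := by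
  have hγ2 : 0 < γ + 1 := by linarith
  have hr : 0 < 1 - 4 * ε / (γ + 1) := sub_pos.2 ((div_lt_one hγ2).2 (by linarith))
  have habs : |1 - ε| ≤ 4 := abs_le.2 ⟨by linarith, by linarith⟩
  rw [mul_comm 4 (γ + 1)]
  gcongr
  linarith

theorem weightedCharGrad_one (K cv γ ε : ℝ) (u τ S : ℝ → ℝ → ℝ) (x t : ℝ) :
    weightedCharGrad K cv γ ε u τ S 1 x t = aeps K cv γ ε u τ S x t := by
  rw [weightedCharGrad, charGrad, pressureGrad, aeps, alphaF]
  ring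

theorem weightedCharGrad_neg_one (K cv γ ε : ℝ) (u τ S : ℝ → ℝ → ℝ) (x t : ℝ) :
    weightedCharGrad K cv γ ε u τ S (-1) x t = beps K cv γ ε u τ S x t := by
  rw [weightedCharGrad, charGrad, pressureGrad, beps, betaF]
  ring

theorem forall_weightedCharGrad_lt_iff {K cv γ ε N : ℝ} {u τ S : ℝ → ℝ → ℝ} {x t : ℝ} :
    (∀ σ : ℤˣ, weightedCharGrad K cv γ ε u τ S (σ : ℤ) x t < N) ↔
      aeps K cv γ ε u τ S x t < N ∧ beps K cv γ ε u τ S x t < N := by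
  rw [← weightedCharGrad_one, ← weightedCharGrad_neg_one]
  refine ⟨fun hlt => ⟨by simpa using hlt 1, by simpa using hlt (-1)⟩, fun ⟨hα, hβ⟩ σ => ?_⟩
  rcases Int.units_eq_one_or σ with rfl | rfl
  · simpa using hα
  · simpa using hβ

namespace IsEulerSolution

variable {K cv γ : ℝ} {T : EReal} {u τ S : ℝ → ℝ → ℝ} {x t : ℝ}

theorem continuousOn_weightedCharGrad (h : IsEulerSolution K cv γ T u τ S) (hT : 0 < T)
    (ε σ : ℝ) : ContinuousOn (uncurry (weightedCharGrad K cv γ ε u τ S σ)) (strip T) := by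
  have hpdx {f : ℝ → ℝ → ℝ} (hf : ContDiffOn ℝ 2 (uncurry f) (strip T)) :=
    continuousOn_pdx_strip hT (hf.of_le one_le_two)
  have hη := h.contDiffOn_etaP.continuousOn
  have hweight : ContinuousOn (fun p : ℝ × ℝ => etaP K γ τ p.1 p.2 ^ (2 * ε / (γ - 1))) (strip T) :=
    hη.rpow_const fun p hp => .inl (h.etaP_pos hp.1 hp.2).ne'
  have hpressure : ContinuousOn (uncurry (pressureGrad K cv γ τ S)) (strip T) :=
    (h.contDiffOn_mF.continuousOn.mul (hpdx h.contDiffOn_etaP)).add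
      ((continuousOn_const.mul (hpdx h.contDiffOn_mF)).mul hη)
  exact hweight.mul ((hpdx h.contDiffOn_u).add (continuousOn_const.mul hpressure))

theorem charDeriv_weightedCharGrad_neg (h : IsEulerSolution K cv γ T u τ S) (ht : 0 < t)
    (htT : (t : EReal) < T) {ε κ N : ℝ} (hε : 0 < ε) (hεγ : 4 * ε < γ + 1)
    (hk2 : |k2e K cv γ ε τ S x t| ≤ κ)
    (hN : max ((γ + 1) * |1 - ε| * κ / ε) (κ / (1 - 4 * ε / (γ + 1))) < N) {σ : ℝ}
    (hσ : σ ^ 2 = 1) (heq : weightedCharGrad K cv γ ε u τ S σ x t = N)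
    (hle : weightedCharGrad K cv γ ε u τ S (-σ) x t ≤ N) :
    charDeriv K cv γ τ S σ (weightedCharGrad K cv γ ε u τ S σ) x t < 0 := by
  have hk : |σ * k2e K cv γ ε τ S x t| ≤ κ := by
    rwa [abs_mul, abs_eq_one_of_sq_eq_one hσ, one_mul]
  rw [h.charDeriv_weightedCharGrad ht htT ε hσ, heq]
  exact mul_neg_of_pos_of_neg (k1e_pos h.K_pos h.one_lt_γ (h.τ_pos ht.le htT) ε)
    (riccati_bracket_neg h.one_lt_γ hε hεγ hk hN hle)

end IsEulerSolution

theorem fullEuler_weighted_alpha_beta_upper_bound_general {K cv γ : ℝ} {T : EReal}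
    {u τ S : ℝ → ℝ → ℝ} (h : IsEulerSolution K cv γ T u τ S) {C : ℝ} (hu : ∀ x, |u x 0| ≤ C)
    (hρ : ∀ x, 1 / τ x 0 ≤ C) (hBV : BoundedVariationOn (fun x => S x 0) univ)
    {ε : ℝ} (hε : 0 < ε) (hεγ : 4 * ε < γ + 1) {K₂hat : ℝ}
    (hk2 : ∀ x t : ℝ, 0 ≤ t → (t : EReal) < T → |k2e K cv γ ε τ S x t| ≤ K₂hat) {N : ℝ}
    (hN0 : ∀ x, aeps K cv γ ε u τ S x 0 < N ∧ beps K cv γ ε u τ S x 0 < N)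
    (hN : max ((γ + 1) * |1 - ε| * K₂hat / ε) (K₂hat / (1 - 4 * ε / (γ + 1))) < N)
    {x t : ℝ} (ht : 0 ≤ t) (htT : (t : EReal) < T) :
    aeps K cv γ ε u τ S x t < N ∧ beps K cv γ ε u τ S x t < N := by
  have hT : 0 < T := (EReal.coe_nonneg.2 ht).trans_lt htT
  obtain ⟨L, hL, hspeed⟩ := h.exists_cF_le hu hρ hBV ht htT
  refine forall_weightedCharGrad_lt_iff.1 fun σ => sub_neg.1 <|
    neg_of_backward_increasing isClosed_univ hL (mem_univ x) ht
      (F := fun (σ : ℤˣ) y s => weightedCharGrad K cv γ ε u τ S (σ : ℤ) y s - N) ?_ ?_ ?_ σ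
  · intro σ
    exact ((h.continuousOn_weightedCharGrad hT ε _).mono (backwardCone_subset_strip htT)).sub
      continuousOn_const
  · rintro σ y s - hbd
    obtain rfl : s = 0 := hbd.resolve_right (by simp)
    exact sub_neg.2 (forall_weightedCharGrad_lt_iff.2 (hN0 y) σ)
  · intro σ y s hp hs hle heq
    have hsT := (backwardCone_subset_strip htT hp).2
    have hdecreasing := h.charDeriv_weightedCharGrad_neg hs hsT hε hεγ (hk2 y s hs.le hsT) hN
      (intUnit_cast_sq σ) (sub_eq_zero.1 heq) (by simpa using hle (-σ))
    exact ⟨_, _, (h.abs_mul_cF hs.le hsT (intUnit_cast_sq σ)).trans_le (hspeed y s hp.2.1),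
      hdecreasing, (hasDerivAt_charDeriv K cv γ τ S σ
        (h.differentiableAt_weightedCharGrad hs hsT ε σ)).sub_const N⟩

/-- invariant upper bound `N` for the weighted gradient variables. -/
theorem fullEuler_weighted_alpha_beta_upper_bound
(K cv γ : ℝ) (hK : 0 < K) (hcv : 0 < cv) (hγ : 1 < γ)
    (T : EReal) (hT : 0 < T)
    (u τ S : ℝ → ℝ → ℝ)
    (hu_reg : ContDiffOn ℝ 2 (fun p : ℝ × ℝ => u p.1 p.2) (strip T))
    (hτ_reg : ContDiffOn ℝ 2 (fun p : ℝ × ℝ => τ p.1 p.2) (strip T))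
    (hS_reg : ContDiffOn ℝ 2 (fun p : ℝ × ℝ => S p.1 p.2) (strip T))
    (hτ_pos : ∀ x t : ℝ, 0 ≤ t → (t : EReal) < T → 0 < τ x t)
    (hpde : ∀ x t : ℝ, 0 ≤ t → (t : EReal) < T → fullEuler K cv γ u τ S x t)
    (hbdd : ∃ C : ℝ, ∀ x : ℝ, |u x 0| ≤ C ∧ τ x 0 ≤ C ∧ 1 / τ x 0 ≤ C ∧ |S x 0| ≤ C ∧
      |deriv (fun y => S y 0) x| ≤ C ∧
      |alphaF K cv γ u τ S x 0| ≤ C ∧ |betaF K cv γ u τ S x 0| ≤ C)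
    (hBV : BoundedVariationOn (fun x => S x 0) Set.univ)
    (ε : ℝ) (hε0 : 0 < ε) (hε : ε < 1 / 4)
    (K₂hat : ℝ)
    (hk2 : ∀ x t : ℝ, 0 ≤ t → (t : EReal) < T → |k2e K cv γ ε τ S x t| < K₂hat)
    (N : ℝ)
    (hN0 : ∀ x : ℝ, aeps K cv γ ε u τ S x 0 < N ∧ beps K cv γ ε u τ S x 0 < N)
    (hN : N > max (4 * (γ + 1) * K₂hat / ε) (2 * K₂hat / (1 - 4 * ε / (γ + 1)))) :
    ∀ x t : ℝ, 0 ≤ t → (t : EReal) < T →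
      aeps K cv γ ε u τ S x t < N ∧ beps K cv γ ε u τ S x t < N := by
  intro x t ht htT
  obtain ⟨C, hC⟩ := hbdd
  have h : IsEulerSolution K cv γ T u τ S :=
    ⟨hK, hcv, hγ, hu_reg, hτ_reg, hS_reg, hτ_pos _ _, fun ht => hpde _ _ ht.le⟩
  have hK₂hat : 0 ≤ K₂hat := (abs_nonneg _).trans (hk2 x t ht htT).le
  exact fullEuler_weighted_alpha_beta_upper_bound_general h (fun x => (hC x).1)
    (fun x => (hC x).2.2.1) hBV hε0 (by linarith) (fun x t ht htT => (hk2 x t ht htT).le) hN0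
    ((riccati_threshold_le hγ hε0 hε hK₂hat).trans_lt hN) ht htT
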